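/- arXiv:2601.05945 — 7 statements merged into one kernel-verified Lean document; each statement's English description precedes it below -/
import Mathlib

section
/- Let F : ℝ → ℝ be Borel measurable with F ∈ L²(π₁). Then the following are equivalent: (i) for every k ∈ ℕ, m^k · ĉ_m(F) → 0 as m → ∞ (i.e. the normalised Hermite coefficients of F decay faster than any inverse power of m); (ii) there exists an infinitely differentiable function G : ℝ → ℝ with G = F π₁-almost everywhere and G^(n) ∈ L²(π₁) for every n ∈ ℕ. -/
open MeasureTheory ProbabilityTheory Real Filter

/-- The standard Gaussian measure `π₁` on `ℝ`. -/
noncomputable def stdGaussian : Measure ℝ := gaussianReal 0 1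

/-- The `m`-th probabilists' Hermite polynomial `He_m`, evaluated at `x`. -/
noncomputable def He (m : ℕ) (x : ℝ) : ℝ := Polynomial.aeval x (Polynomial.hermite m)

/-- The normalised Hermite coefficients `ĉ_m(F)`. -/
noncomputable def hermiteCoeff (F : ℝ → ℝ) (m : ℕ) : ℝ :=
  (Real.sqrt (Nat.factorial m))⁻¹ * ∫ x, F x * He m x ∂stdGaussian

lemma my_derivative_hermite (n : ℕ) : Polynomial.derivative (Polynomial.hermite (n + 1)) =
    ((n : Polynomial ℤ) + 1) * Polynomial.hermite n := by
  induction n with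
  | zero => simp [Polynomial.hermite_succ]
  | succ k ih =>
    rw [Polynomial.hermite_succ (k + 1), ih]
    simp only [Polynomial.derivative_sub, Polynomial.derivative_mul, Polynomial.derivative_X,
      Polynomial.derivative_add, Polynomial.derivative_natCast, Polynomial.derivative_one]
    rw [ih, Polynomial.hermite_succ k]
    push_cast
    ring

lemma He_zero (x : ℝ) : He 0 x = 1 := by simp [He]

lemma He_one (x : ℝ) : He 1 x = x := by simp [He]

lemma He_rec (n : ℕ) (x : ℝ) : He (n + 2) x = x * He (n + 1) x - (n + 1) * He n x := by
  unfold He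
  rw [Polynomial.hermite_succ (n + 1), my_derivative_hermite]
  simp

lemma He_hasDerivAt (n : ℕ) (x : ℝ) : HasDerivAt (He n) (n * He (n - 1) x) x := by
  have := Polynomial.hasDerivAt_aeval (Polynomial.hermite n) x
  convert! this using 1
  cases n with
  | zero => simp
  | succ k => rw [my_derivative_hermite]; simp [He]

lemma He_succ (n : ℕ) (x : ℝ) : He (n + 1) x = x * He n x - n * He (n - 1) x := by
  cases n with
  | zero => simp [He_zero, He_one]
  | succ k => rw [He_rec]; simp

lemma He_continuous (n : ℕ) : Continuous (He n) :=
  continuous_iff_continuousAt.2 fun x => (He_hasDerivAt n x).continuousAt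

instance : IsProbabilityMeasure stdGaussian := by unfold _root_.stdGaussian; infer_instance

lemma memLp_poly (p : Polynomial ℝ) : MemLp (fun x => p.eval x) 2 stdGaussian := by
  induction p using Polynomial.induction_on' with
  | add p q hp hq => simpa using! hp.add hq
  | monomial n a =>
    simp only [Polynomial.eval_monomial]
    apply MemLp.const_mul
    have h : Integrable (fun x : ℝ => x ^ (2 * n)) stdGaussian := by
      have := (memLp_id_gaussianReal (μ := 0) (v := 1) (2 * n : ℕ)).integrable_norm_pow'
      simp only [id] at this
      refine this.congr (ae_of_all _ fun x => ?_)
      simp only [Real.norm_eq_abs]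
      exact (even_two_mul n).pow_abs x
    refine (memLp_two_iff_integrable_sq (by fun_prop)).2 ?_
    refine h.congr (ae_of_all _ fun x => ?_)
    simp only
    ring

lemma memLp_He (n : ℕ) : MemLp (He n) 2 stdGaussian := by
  convert memLp_poly ((Polynomial.hermite n).map (Int.castRingHom ℝ)) using 2 with x
  simp [He, Polynomial.aeval_def, Polynomial.eval_map]

lemma memLp_pow_He (k n : ℕ) : MemLp (fun x => x ^ k * He n x) 2 stdGaussian := by
  convert memLp_poly (Polynomial.X ^ k * (Polynomial.hermite n).map (Int.castRingHom ℝ)) using 2 with x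
  simp [He, Polynomial.aeval_def, Polynomial.eval_map]

lemma integral_std (f : ℝ → ℝ) :
    ∫ x, f x ∂stdGaussian = ∫ x, f x * gaussianPDFReal 0 1 x := by
  unfold _root_.stdGaussian
  rw [integral_gaussianReal_eq_integral_smul one_ne_zero]
  simp only [smul_eq_mul, mul_comm]

lemma integrable_std {f : ℝ → ℝ} (h : Integrable f stdGaussian) :
    Integrable (fun x => f x * gaussianPDFReal 0 1 x) := by
  unfold _root_.stdGaussian at h
  rw [gaussianReal_of_var_ne_zero _ one_ne_zero, integrable_withDensity_iff_integrable_smul'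
    (measurable_gaussianPDF _ _) (ae_of_all _ fun x => gaussianPDF_lt_top)] at h
  simpa only [toReal_gaussianPDF, smul_eq_mul, mul_comm] using h

lemma pdf_hasDerivAt (x : ℝ) :
    HasDerivAt (gaussianPDFReal 0 1) (- x * gaussianPDFReal 0 1 x) x := by
  have h : HasDerivAt (fun y : ℝ => (√(2 * π))⁻¹ * rexp (-(y^2)/2))
      ((√(2 * π))⁻¹ * (rexp (-(x^2)/2) * (-(2 * x)/2))) x := by
    refine HasDerivAt.const_mul _ (HasDerivAt.exp ?_)
    exact (by simpa using (hasDerivAt_pow 2 x) : HasDerivAt (fun y : ℝ => y^2) (2*x) x).fun_neg.div_const 2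
  convert! h using 1
  · ext y; simp [gaussianPDFReal]
  · simp [gaussianPDFReal]; ring

/-- integration by parts -/
lemma ibp (G G' : ℝ → ℝ) (hG : ∀ x, HasDerivAt G (G' x) x) (h1 : MemLp G 2 stdGaussian)
    (h2 : MemLp G' 2 stdGaussian) (m : ℕ) :
    ∫ x, G x * He (m + 1) x ∂stdGaussian = ∫ x, G' x * He m x ∂stdGaussian := by
  rw [integral_std, integral_std]
  have := integral_mul_deriv_eq_deriv_mul_of_integrable (u := G) (u' := G')
    (v := fun x => He m x * gaussianPDFReal 0 1 x)
    (v' := fun x => - (He (m + 1) x * gaussianPDFReal 0 1 x)) (fun x _ => hG x)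
    (fun x _ => by
      convert! (He_hasDerivAt m x).mul (pdf_hasDerivAt x) using 1
      rw [He_succ]; ring)
    (by
      convert! (integrable_std (h1.integrable_mul (memLp_He (m+1)))).neg using 1
      ext x; simp; ring)
    (by
      convert! (integrable_std (h2.integrable_mul (memLp_He m))) using 1
      ext x; simp; ring)
    (by
      convert! (integrable_std (h1.integrable_mul (memLp_He m))) using 1
      ext x; simp; ring)
  simp only [mul_neg, integral_neg, neg_inj] at this
  simpa only [mul_assoc] using this

lemma He_orth (m n : ℕ) : ∫ x, He n x * He m x ∂stdGaussian = if m = n then (m.factorial : ℝ) else 0 := by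
  have key : ∀ m n : ℕ, ∫ x, He n x * He (m + 1) x ∂stdGaussian
      = n * ∫ x, He (n - 1) x * He m x ∂stdGaussian := by
    intro m n
    rw [ibp (He n) _ (He_hasDerivAt n) (memLp_He n) ((memLp_He (n-1)).const_mul _) m]
    simp only [mul_assoc, integral_const_mul]
  induction m generalizing n with
  | zero =>
    cases n with
    | zero => simp [He_zero]
    | succ k =>
      have := key k 0
      simp only [mul_comm (He 0 _)] at this
      rw [this]; simp
  | succ m ih =>
    rw [key, ih]
    cases n with
    | zero => simp
    | succ k =>
      simp only [Nat.add_sub_cancel, add_left_inj]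
      split_ifs with h
      · subst h; rw [Nat.factorial_succ]; push_cast; ring
      · simp

/-- pointwise bound -/
lemma He_bound (m : ℕ) (x : ℝ) : He m x ^ 2 ≤ 2 * m.factorial * rexp (x ^ 2) := by
  have h0 : ∀ m : ℕ, He m 0 ^ 2 ≤ m.factorial := by
    intro m
    induction m using Nat.twoStepInduction with
    | zero => simp [He_zero]
    | one => simp [He_one]
    | more n h1 h2 =>
      rw [He_rec, Nat.factorial_succ, Nat.factorial_succ]
      push_cast
      have : (0:ℝ) ≤ n := by positivity
      have : (0:ℝ) ≤ n.factorial := by positivity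
      calc _ = ((n:ℝ)+1)*((n:ℝ)+1) * He n 0 ^ 2 := by ring
        _ ≤ (n + 1 + 1) * ((n + 1) * n.factorial) := by
          rw [← mul_assoc]; gcongr; linarith
  cases m with
  | zero =>
    have := Real.one_le_exp (sq_nonneg x)
    simp [He_zero]; linarith
  | succ m =>
  let E : ℝ → ℝ := fun x => ((m + 1) * He (m + 1) x ^ 2 + ((m + 1) * He m x) ^ 2) * rexp (-x ^ 2)
  have hE : ∀ x, HasDerivAt E (- 2 * x * (m + 1) * He (m + 1) x ^ 2 * rexp (-x^2)) x := by
    intro x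
    have a := He_hasDerivAt (m + 1) x
    have b := He_hasDerivAt m x
    have e : HasDerivAt (fun x : ℝ => rexp (-x^2)) (rexp (-x^2) * (-(2*x))) x :=
      HasDerivAt.exp ((by simpa using (hasDerivAt_pow 2 x) : HasDerivAt (fun y : ℝ => y^2) (2*x) x).fun_neg)
    convert! (((a.fun_pow 2).const_mul ((m:ℝ)+1)).fun_add ((b.const_mul ((m:ℝ)+1)).fun_pow 2)).fun_mul e using 1
    have := He_succ m x
    simp only [Nat.add_sub_cancel, Nat.cast_add, Nat.cast_one]
    have h2 : (m:ℝ) * He (m - 1) x = x * He m x - He (m+1) x := by linarith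
    rw [h2]
    norm_num
    ring
  have hcont : Continuous E := continuous_iff_continuousAt.2 fun x => (hE x).continuousAt
  have hle : E x ≤ E 0 := by
    rcases le_total 0 x with hx | hx
    · refine antitoneOn_of_deriv_nonpos (convex_Ici 0) hcont.continuousOn
        (fun y _ => (hE y).differentiableAt.differentiableWithinAt) ?_ (Set.mem_Ici.2 le_rfl) hx hx
      intro y hy
      rw [(hE y).deriv]
      have : 0 < y := by simpa using hy
      have : 0 ≤ y * (m + 1) * He (m + 1) y ^ 2 * rexp (-y^2) := by positivity
      linarith
    · refine monotoneOn_of_deriv_nonneg (convex_Iic 0) hcont.continuousOn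
        (fun y _ => (hE y).differentiableAt.differentiableWithinAt) ?_ hx (Set.mem_Iic.2 le_rfl) hx
      intro y hy
      rw [(hE y).deriv]
      have : 0 < -y := by simpa using hy
      have : 0 ≤ (-y) * (m + 1) * He (m + 1) y ^ 2 * rexp (-y^2) := by positivity
      linarith
  have hE0 : E 0 ≤ (m + 1) * (2 * (m+1).factorial) := by
    simp only [E]
    have a := h0 (m+1)
    have b := h0 m
    have c : (0:ℝ) ≤ m + 1 := by positivity
    have d : ((m:ℝ) + 1) * He m 0 ^ 2 ≤ (m+1).factorial := by
      rw [Nat.factorial_succ]; push_cast; gcongr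
    simp only [ne_eq, OfNat.ofNat_ne_zero, not_false_eq_true, zero_pow, neg_zero, Real.exp_zero, mul_one]
    calc _ = ((m:ℝ)+1) * (He (m+1) 0 ^ 2 + (m+1) * He m 0 ^ 2) := by ring
      _ ≤ _ := by gcongr; linarith
  have hEx : (m + 1) * (He (m+1) x ^ 2 * rexp (-x^2)) ≤ E x := by
    simp only [E]
    have : 0 ≤ ((m + 1) * He m x) ^ 2 * rexp (-x^2) := by positivity
    linarith
  have h3 : He (m+1) x ^ 2 * rexp (-x^2) ≤ 2 * (m+1).factorial :=
    le_of_mul_le_mul_left (hEx.trans (hle.trans hE0)) (by positivity)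
  calc _ = He (m+1) x ^ 2 * rexp (-x^2) * rexp (x^2) := by
        rw [mul_assoc, ← Real.exp_add]; simp
    _ ≤ _ := by gcongr

lemma exp_memLp (s : ℝ) : MemLp (fun x : ℝ => rexp (|s * x|)) 2 stdGaussian := by
  have h1 : Integrable (fun x : ℝ => rexp (2 * s * x)) stdGaussian :=
    integrable_exp_mul_gaussianReal _
  have h2 : Integrable (fun x : ℝ => rexp (-(2 * s) * x)) stdGaussian :=
    integrable_exp_mul_gaussianReal _
  refine (memLp_two_iff_integrable_sq (by fun_prop)).2 ?_
  refine (h1.add h2).mono' (by fun_prop) (ae_of_all _ fun x => ?_)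
  rw [Real.norm_eq_abs, abs_of_nonneg (by positivity), ← Real.exp_nat_mul]
  simp only [Pi.add_apply]
  rcases abs_cases (s * x) with ⟨h, _⟩ | ⟨h, _⟩
  · rw [h]
    have := Real.exp_pos (-(2 * s) * x)
    have e : ((2:ℕ):ℝ) * (s * x) = 2 * s * x := by push_cast; ring
    rw [e]; linarith
  · rw [h]
    have := Real.exp_pos ((2 * s) * x)
    have e : ((2:ℕ):ℝ) * -(s * x) = -(2 * s) * x := by push_cast; ring
    rw [e]; linarith

lemma moments_zero (g : ℝ → ℝ) (hg : MemLp g 2 stdGaussian)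
    (h : ∀ m, ∫ x, g x * He m x ∂stdGaussian = 0) (n m : ℕ) :
    ∫ x, g x * (x ^ n * He m x) ∂stdGaussian = 0 := by
  induction n generalizing m with
  | zero => simpa using h m
  | succ n ih =>
    have e : ∀ x, g x * (x ^ (n + 1) * He m x) = g x * (x ^ n * He (m + 1) x)
        + m * (g x * (x ^ n * He (m - 1) x)) := by
      intro x; rw [He_succ]; ring
    simp_rw [e]
    have i1 : Integrable (fun x => g x * (x ^ n * He (m + 1) x)) stdGaussian :=
      hg.integrable_mul (memLp_pow_He n (m+1))
    have i2 : Integrable (fun x => g x * (x ^ n * He (m - 1) x)) stdGaussian :=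
      hg.integrable_mul (memLp_pow_He n (m-1))
    rw [integral_add i1 (i2.const_mul _), integral_const_mul, ih, ih]
    simp

lemma gauss_fourier_zero (g : ℝ → ℝ) (hg : MemLp g 2 stdGaussian)
    (h : ∀ m, ∫ x, g x * He m x ∂stdGaussian = 0) (s : ℝ) :
    ∫ x, (g x : ℂ) * Complex.exp (s * x * Complex.I) ∂stdGaussian = 0 := by
  have hm : AEStronglyMeasurable (fun x => (g x : ℂ)) stdGaussian :=
    Complex.continuous_ofReal.comp_aestronglyMeasurable hg.1
  have key := hasSum_integral_of_dominated_convergence (μ := _root_.stdGaussian)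
    (F := fun (n : ℕ) (x : ℝ) => (g x : ℂ) * ((s * x * Complex.I) ^ n / (n.factorial : ℂ)))
    (f := fun x => (g x : ℂ) * Complex.exp (s * x * Complex.I))
    (fun n x => |g x| * (|s * x| ^ n / n.factorial))
    (fun n => hm.mul (by fun_prop)) (fun n => ae_of_all _ fun x => by simp [abs_mul])
    (ae_of_all _ fun x => (Real.summable_pow_div_factorial _).mul_left _)
    (by
      have : ∀ x, ∑' n : ℕ, |g x| * (|s * x| ^ n / n.factorial) = |g x| * rexp |s * x| := by
        intro x
        rw [tsum_mul_left, Real.exp_eq_exp_ℝ, NormedSpace.exp_eq_tsum_div]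
      simp_rw [this]
      exact hg.abs.integrable_mul (exp_memLp s))
    (ae_of_all _ fun x => by
      have := NormedSpace.expSeries_div_hasSum_exp (s * x * Complex.I : ℂ)
      rw [Complex.exp_eq_exp_ℂ]
      exact this.mul_left _)
  have z : ∀ n : ℕ, ∫ x, (g x : ℂ) * ((s * x * Complex.I) ^ n / (n.factorial : ℂ)) ∂stdGaussian = 0 := by
    intro n
    have e : ∀ x : ℝ, (g x : ℂ) * ((s * x * Complex.I) ^ n / (n.factorial : ℂ))
      = ((s * Complex.I) ^ n / (n.factorial : ℂ)) * ((g x * (x ^ n * He 0 x) : ℝ) : ℂ) := by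
      intro x; rw [He_zero]; push_cast; ring
    simp_rw [e]
    rw [integral_const_mul, integral_complex_ofReal, moments_zero g hg h]
    simp
  simp_rw [z] at key
  exact key.unique hasSum_zero

lemma complete_He (g : ℝ → ℝ) (hgm : Measurable g) (hg : MemLp g 2 stdGaussian)
    (h : ∀ m, ∫ x, g x * He m x ∂stdGaussian = 0) : g =ᵐ[_root_.stdGaussian] 0 := by
  have hi : Integrable g stdGaussian := hg.integrable (by norm_num)
  have f1 : IsFiniteMeasure (_root_.stdGaussian.withDensity fun x => ENNReal.ofReal (g x)) :=
    isFiniteMeasure_withDensity_ofReal hi.2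
  have f2 : IsFiniteMeasure (_root_.stdGaussian.withDensity fun x => ENNReal.ofReal (-g x)) :=
    isFiniteMeasure_withDensity_ofReal hi.neg.2
  have hch : ∀ f : ℝ → ℝ, Measurable f → ∀ s : ℝ,
      charFun (_root_.stdGaussian.withDensity fun x => ENNReal.ofReal (f x)) s =
      ∫ x, ((max (f x) 0 : ℝ) : ℂ) * Complex.exp (s * x * Complex.I) ∂stdGaussian := by
    intro f hf s
    rw [charFun_apply_real, integral_withDensity_eq_integral_toReal_smul (by fun_prop)
      (ae_of_all _ fun x => ENNReal.ofReal_lt_top)]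
    simp [ENNReal.toReal_ofReal']
  have hint : ∀ f : ℝ → ℝ, Integrable f stdGaussian → ∀ s : ℝ, Integrable
      (fun x => ((max (f x) 0 : ℝ) : ℂ) * Complex.exp (s * x * Complex.I)) stdGaussian := by
    intro f hf s
    have h1 : Integrable (fun x => ((max (f x) 0 : ℝ) : ℂ)) stdGaussian := hf.pos_part.ofReal
    refine h1.mul_bdd (c := 1) (by fun_prop) (ae_of_all _ fun x => ?_)
    rw [← Complex.ofReal_mul, Complex.norm_exp_ofReal_mul_I]
  have heq : (_root_.stdGaussian.withDensity fun x => ENNReal.ofReal (g x)) =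
      (_root_.stdGaussian.withDensity fun x => ENNReal.ofReal (-g x)) := by
    apply Measure.ext_of_charFun
    ext s
    rw [hch g hgm, hch (fun x => -g x) hgm.neg, ← sub_eq_zero, ← integral_sub (hint g hi s) (hint (fun x => -g x) hi.neg s),
      ← gauss_fourier_zero g hg h s]
    congr 1
    ext x
    rw [← sub_mul, ← Complex.ofReal_sub]
    congr 2
    rcases le_total 0 (g x) with hx | hx
    · rw [max_eq_left hx, max_eq_right (by linarith)]; ring
    · rw [max_eq_right hx, max_eq_left (by linarith)]; ring
  rw [withDensity_eq_iff_of_sigmaFinite (by fun_prop) (by fun_prop)] at heq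
  filter_upwards [heq] with x hx
  rcases le_total 0 (g x) with h0 | h0
  · rw [ENNReal.ofReal_of_nonpos (by linarith : -g x ≤ 0), ENNReal.ofReal_eq_zero] at hx
    exact le_antisymm hx h0
  · rw [ENNReal.ofReal_of_nonpos h0, eq_comm, ENNReal.ofReal_eq_zero] at hx
    simp only [Pi.zero_apply]; linarith

noncomputable def hN (m : ℕ) (x : ℝ) : ℝ := (√(m.factorial : ℝ))⁻¹ * He m x

lemma hN_memLp (m : ℕ) : MemLp (hN m) 2 stdGaussian := (memLp_He m).const_mul _

lemma hN_orth (m n : ℕ) : ∫ x, hN n x * hN m x ∂stdGaussian = if m = n then 1 else 0 := by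
  have e : ∀ x, hN n x * hN m x
      = ((√(m.factorial : ℝ))⁻¹ * (√(n.factorial : ℝ))⁻¹) * (He n x * He m x) := by
    intro x; unfold hN; ring
  simp_rw [e]
  rw [integral_const_mul, He_orth]
  split_ifs with h
  · subst h
    have h0 : (0:ℝ) < m.factorial := by positivity
    rw [← mul_inv, Real.mul_self_sqrt h0.le, inv_mul_cancel₀ h0.ne']
  · simp

lemma hermiteCoeff_eq (F : ℝ → ℝ) (m : ℕ) : hermiteCoeff F m = ∫ x, F x * hN m x ∂stdGaussian := by
  unfold hermiteCoeff hN
  rw [← integral_const_mul]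
  congr 1; ext x; ring

lemma abs_integral_bound (f g : ℝ → ℝ) (hf : MemLp f 2 stdGaussian) (hg : MemLp g 2 stdGaussian) :
    ∫ x, |f x * g x| ∂stdGaussian ≤
      ((∫ x, f x ^ 2 ∂stdGaussian) + ∫ x, g x ^ 2 ∂stdGaussian) / 2 := by
  rw [← integral_add hf.integrable_sq hg.integrable_sq, ← integral_div]
  refine integral_mono (hf.integrable_mul hg).abs
    ((hf.integrable_sq.add hg.integrable_sq).div_const 2) fun x => ?_
  simp only [Pi.add_apply]
  rw [abs_mul]
  nlinarith [sq_nonneg (|f x| - |g x|), sq_abs (f x), sq_abs (g x)]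

lemma hN_sq (m : ℕ) : ∫ x, hN m x ^ 2 ∂stdGaussian = 1 := by
  have := hN_orth m m
  simpa [pow_two] using this

lemma coeff_bound (H : ℝ → ℝ) (hH : MemLp H 2 stdGaussian) (m : ℕ) :
    |hermiteCoeff H m| ≤ ((∫ x, H x ^ 2 ∂stdGaussian) + 1) / 2 := by
  rw [hermiteCoeff_eq, ← hN_sq m]
  exact (abs_integral_le_integral_abs).trans (abs_integral_bound _ _ hH (hN_memLp m))

lemma ibp_iter (G : ℝ → ℝ) (hG : ∀ n : ℕ, ContDiff ℝ n G)
    (h : ∀ n : ℕ, MemLp (iteratedDeriv n G) 2 stdGaussian) (n m : ℕ) :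
    ∫ x, G x * He (m + n) x ∂stdGaussian = ∫ x, iteratedDeriv n G x * He m x ∂stdGaussian := by
  induction n generalizing m with
  | zero => simp
  | succ n ih =>
    have : m + (n + 1) = (m + 1) + n := by ring
    rw [this, ih]
    refine ibp _ _ (fun x => ?_) (h n) (h (n+1)) m
    rw [iteratedDeriv_succ]
    exact ((hG (n+1)).differentiable_iteratedDeriv n (by exact_mod_cast Nat.lt_succ_self n)).differentiableAt.hasDerivAt

lemma dir2 (G : ℝ → ℝ) (hG : ∀ n : ℕ, ContDiff ℝ n G)
    (h : ∀ n : ℕ, MemLp (iteratedDeriv n G) 2 stdGaussian) (k : ℕ) :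
    Tendsto (fun m : ℕ => (m : ℝ) ^ k * hermiteCoeff G m) atTop (nhds 0) := by
  set n := 2 * (k + 1) with hn
  rw [← tendsto_add_atTop_iff_nat n]
  set K := ((∫ x, iteratedDeriv n G x ^ 2 ∂stdGaussian) + 1) / 2 with hK
  have hK0 : 0 ≤ K := by
    have : 0 ≤ ∫ x, iteratedDeriv n G x ^ 2 ∂stdGaussian := integral_nonneg fun x => sq_nonneg _
    positivity
  have hb : ∀ m : ℕ, |hermiteCoeff G (m + n)| * ((m:ℝ) + 1) ^ (k + 1) ≤ K := by
    intro m
    refine le_trans ?_ (coeff_bound _ (h n) m)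
    unfold hermiteCoeff
    rw [ibp_iter G hG h, abs_mul, abs_mul, mul_right_comm]
    gcongr
    rw [abs_of_nonneg (by positivity), abs_of_nonneg (by positivity)]
    have h1 : √(m.factorial : ℝ) * ((m:ℝ)+1)^(k+1) ≤ √((m+n).factorial : ℝ) := by
      apply Real.le_sqrt_of_sq_le
      rw [mul_pow, Real.sq_sqrt (by positivity), ← pow_mul, mul_comm (k+1) 2, ← hn]
      exact_mod_cast Nat.factorial_mul_pow_le_factorial
    have p1 : 0 < √(m.factorial : ℝ) := by positivity
    have p2 : 0 < √((m+n).factorial : ℝ) := by positivity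
    rw [inv_mul_le_iff₀ p2, ← div_eq_mul_inv, le_div_iff₀ p1]
    linarith
  have ht : Tendsto (fun m : ℕ => (K * n ^ k) * (1 / ((m:ℝ) + 1))) atTop (nhds 0) := by
    simpa using tendsto_one_div_add_atTop_nhds_zero_nat.const_mul (K * (n:ℝ) ^ k)
  refine squeeze_zero_norm (fun m => ?_) ht
  rw [Real.norm_eq_abs, abs_mul, abs_of_nonneg (by positivity : (0:ℝ) ≤ ((m+n : ℕ):ℝ)^k),
    mul_one_div, le_div_iff₀ (by positivity)]
  have h2 : ((m + n : ℕ) : ℝ) ≤ n * (m + 1) := by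
    have : (1:ℝ) ≤ n := by rw [hn]; push_cast; linarith [(Nat.cast_nonneg k : (0:ℝ) ≤ k)]
    push_cast
    nlinarith [(Nat.cast_nonneg m : (0:ℝ) ≤ m)]
  calc _ ≤ (n * ((m:ℝ) + 1)) ^ k * |hermiteCoeff G (m + n)| * (m + 1) := by gcongr
    _ = (|hermiteCoeff G (m + n)| * ((m:ℝ) + 1) ^ (k + 1)) * n ^ k := by rw [mul_pow]; ring
    _ ≤ K * n ^ k := by gcongr; exact hb m

def Rapid (c : ℕ → ℝ) : Prop := ∀ k : ℕ, ∃ C : ℝ, ∀ m : ℕ, |c m| * ((m:ℝ) + 1) ^ k ≤ C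

noncomputable def Dsh (c : ℕ → ℝ) (m : ℕ) : ℝ := √((m:ℝ) + 1) * c (m + 1)

lemma Rapid.Dsh {c : ℕ → ℝ} (h : Rapid c) : Rapid (Dsh c) := by
  intro k
  obtain ⟨C, hC⟩ := h (k + 1)
  refine ⟨C, fun m => le_trans ?_ (hC (m + 1))⟩
  unfold _root_.Dsh
  rw [abs_mul, abs_of_nonneg (Real.sqrt_nonneg _)]
  have h1 : √((m:ℝ) + 1) ≤ (m:ℝ) + 1 := by
    rw [Real.sqrt_le_left (by positivity)]
    nlinarith [(Nat.cast_nonneg m : (0:ℝ) ≤ m)]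
  push_cast
  calc √((m:ℝ) + 1) * |c (m + 1)| * ((m:ℝ) + 1) ^ k ≤ ((m:ℝ) + 1 + 1) * |c (m + 1)| * ((m:ℝ) + 1 + 1) ^ k := by
        gcongr
        · linarith
        · linarith
    _ = _ := by ring

lemma Rapid.summable {c : ℕ → ℝ} (h : Rapid c) : Summable fun m : ℕ => |c m| * ((m:ℝ) + 1) := by
  obtain ⟨C, hC⟩ := h 3
  have hs : Summable fun m : ℕ => C * (1 / ((m:ℝ) + 1) ^ 2) := by
    refine Summable.mul_left _ ?_
    have := (summable_nat_add_iff 1).2 (Real.summable_one_div_nat_pow.2 (by norm_num : 1 < 2))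
    simpa using this
  refine Summable.of_nonneg_of_le (fun m => by positivity) (fun m => ?_) hs
  rw [mul_one_div, le_div_iff₀ (by positivity)]
  calc _ = |c m| * ((m:ℝ) + 1) ^ 3 := by ring
    _ ≤ C := hC m

lemma Rapid.summable_abs {c : ℕ → ℝ} (h : Rapid c) : Summable fun m : ℕ => |c m| :=
  Summable.of_nonneg_of_le (fun m => abs_nonneg _) (fun m => by
    nlinarith [abs_nonneg (c m), (Nat.cast_nonneg m : (0:ℝ) ≤ m)]) h.summable

lemma hN_bound (m : ℕ) (x : ℝ) : |hN m x| ≤ 2 * rexp (x ^ 2) := by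
  apply abs_le_of_sq_le_sq _ (by positivity)
  have h0 : (0:ℝ) < m.factorial := by positivity
  have h1 := He_bound m x
  have h2 := Real.one_le_exp (sq_nonneg x)
  unfold hN
  rw [mul_pow, inv_pow, Real.sq_sqrt h0.le, inv_mul_le_iff₀ h0]
  nlinarith [mul_le_mul_of_nonneg_left h2 (mul_nonneg h0.le (Real.exp_nonneg (x^2))), mul_nonneg h0.le (Real.exp_nonneg (x^2))]

lemma sqrt_fact_succ (m : ℕ) : √((m + 1).factorial : ℝ) = √((m:ℝ) + 1) * √(m.factorial : ℝ) := by
  rw [Nat.factorial_succ]; push_cast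
  rw [Real.sqrt_mul (by positivity)]

lemma hN_hasDerivAt (m : ℕ) (x : ℝ) : HasDerivAt (hN m) (√(m:ℝ) * hN (m - 1) x) x := by
  convert! (He_hasDerivAt m x).const_mul (√(m.factorial : ℝ))⁻¹ using 1
  cases m with
  | zero => simp
  | succ k =>
    unfold hN
    rw [sqrt_fact_succ]
    simp only [Nat.add_sub_cancel, Nat.cast_add, Nat.cast_one]
    have p : 0 < √((k:ℝ) + 1) := by positivity
    have q : √((k:ℝ) + 1) ^ 2 = k + 1 := Real.sq_sqrt (by positivity)
    have p2 : 0 < √(k.factorial : ℝ) := by positivity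
    field_simp
    rw [q]

noncomputable def Ser (c : ℕ → ℝ) (x : ℝ) : ℝ := ∑' m, c m * hN m x

lemma Ser_summable {c : ℕ → ℝ} (h : Rapid c) (x : ℝ) : Summable fun m => c m * hN m x := by
  refine Summable.of_norm_bounded (h.summable_abs.mul_right (2 * rexp (x ^ 2))) fun m => ?_
  rw [Real.norm_eq_abs, abs_mul]
  gcongr
  exact hN_bound m x

lemma Ser_hasDerivAt {c : ℕ → ℝ} (h : Rapid c) (x : ℝ) :
    HasDerivAt (Ser c) (Ser (Dsh c) x) x := by
  set R := |x| + 1 with hR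
  have hx : x ∈ Set.Ioo (-R) R := by
    rw [Set.mem_Ioo, ← abs_lt]; linarith
  have b : ∀ (m : ℕ) (y : ℝ), y ∈ Set.Ioo (-R) R →
      ‖c m * (√(m:ℝ) * hN (m - 1) y)‖ ≤ |c m| * ((m:ℝ) + 1) * (2 * rexp (R ^ 2)) := by
    intro m y hy
    rw [Real.norm_eq_abs, abs_mul, abs_mul, mul_assoc, abs_of_nonneg (Real.sqrt_nonneg _)]
    have h1 : √(m:ℝ) ≤ (m:ℝ) + 1 := by
      rw [Real.sqrt_le_left (by positivity)]
      nlinarith [(Nat.cast_nonneg m : (0:ℝ) ≤ m)]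
    have h2 : y ^ 2 ≤ R ^ 2 := by
      rw [sq_le_sq, abs_of_nonneg (by positivity : 0 ≤ R)]
      exact (abs_lt.2 hy).le
    gcongr
    exact (hN_bound _ y).trans (by gcongr)
  have key := hasDerivAt_tsum_of_isPreconnected (g := fun m y => c m * hN m y)
    (g' := fun m y => c m * (√(m:ℝ) * hN (m - 1) y))
    (h.summable.mul_right (2 * rexp (R ^ 2))) isOpen_Ioo isPreconnected_Ioo
    (fun m y _ => (hN_hasDerivAt m y).const_mul _) b hx (Ser_summable h x) hx
  convert! key using 1
  have hs : Summable fun m => c m * (√(m:ℝ) * hN (m - 1) x) :=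
    Summable.of_norm_bounded (h.summable.mul_right (2 * rexp (R ^ 2))) fun m => b m x hx
  rw [hs.tsum_eq_zero_add]
  simp only [Nat.cast_zero, Real.sqrt_zero, zero_mul, mul_zero, zero_add, Nat.add_sub_cancel]
  unfold Ser Dsh
  congr 1; ext m; push_cast; ring

lemma Rapid.iter {c : ℕ → ℝ} (h : Rapid c) (n : ℕ) : Rapid (_root_.Dsh^[n] c) := by
  induction n with
  | zero => simpa
  | succ n ih => rw [Function.iterate_succ_apply']; exact ih.Dsh

lemma Ser_iteratedDeriv {c : ℕ → ℝ} (h : Rapid c) (n : ℕ) :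
    iteratedDeriv n (Ser c) = Ser (Dsh^[n] c) := by
  induction n with
  | zero => simp
  | succ n ih =>
    rw [iteratedDeriv_succ, ih, Function.iterate_succ_apply']
    ext x
    exact (Ser_hasDerivAt (h.iter n) x).deriv

lemma Ser_contDiff {c : ℕ → ℝ} (h : Rapid c) (n : ℕ) : ContDiff ℝ n (Ser c) := by
  refine contDiff_of_differentiable_iteratedDeriv fun m _ => ?_
  rw [Ser_iteratedDeriv h]
  exact fun x => (Ser_hasDerivAt (h.iter m) x).differentiableAt

lemma hN_eLpNorm (m : ℕ) : eLpNorm (hN m) 2 stdGaussian = 1 := by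
  rw [(hN_memLp m).eLpNorm_eq_integral_rpow_norm (by norm_num) (by norm_num)]
  simp [hN_sq]

lemma Ser_memLp {c : ℕ → ℝ} (h : Rapid c) : MemLp (Ser c) 2 stdGaussian := by
  have hc : Continuous (Ser c) := (Ser_contDiff h 0).continuous
  refine ⟨hc.aestronglyMeasurable, ?_⟩
  have hm : ∀ m, MemLp (fun x => c m * hN m x) 2 stdGaussian := fun m => (hN_memLp m).const_mul _
  refine lt_of_le_of_lt (Lp.eLpNorm_le_of_ae_tendsto (u := atTop)
    (f := fun n => ∑ m ∈ Finset.range n, fun x => c m * hN m x)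
    (C := ENNReal.ofReal (∑' m, |c m|)) (Eventually.of_forall fun n => ?_) (fun n => ?_)
    (ae_of_all _ fun x => ?_)) ENNReal.ofReal_lt_top
  · refine (eLpNorm_sum_le (fun m _ => (hm m).1) (by norm_num)).trans ?_
    calc _ = ∑ m ∈ Finset.range n, ENNReal.ofReal |c m| := by
          refine Finset.sum_congr rfl fun m _ => ?_
          have := eLpNorm_const_smul (c m) (hN m) 2 _root_.stdGaussian
          rw [hN_eLpNorm, mul_one, ← ofReal_norm_eq_enorm, Real.norm_eq_abs] at this
          exact this
      _ = ENNReal.ofReal (∑ m ∈ Finset.range n, |c m|) := by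
          rw [ENNReal.ofReal_sum_of_nonneg fun m _ => abs_nonneg _]
      _ ≤ _ := ENNReal.ofReal_le_ofReal (h.summable_abs.sum_le_tsum _ fun m _ => abs_nonneg _)
  · exact (memLp_finsetSum' _ fun m _ => hm m).1
  · simpa [Ser] using (Ser_summable h x).hasSum.tendsto_sum_nat

lemma Ser_coeff {c : ℕ → ℝ} (h : Rapid c) (m : ℕ) : hermiteCoeff (Ser c) m = c m := by
  rw [hermiteCoeff_eq]
  have key := hasSum_integral_of_summable_integral_norm (μ := _root_.stdGaussian)
    (F := fun k x => c k * (hN k x * hN m x))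
    (fun k => ((hN_memLp k).integrable_mul (hN_memLp m)).const_mul _)
    (by
      refine Summable.of_nonneg_of_le (fun k => integral_nonneg fun x => norm_nonneg _)
        (fun k => ?_) h.summable_abs
      simp only [Real.norm_eq_abs, abs_mul (c k)]
      rw [integral_const_mul]
      have := abs_integral_bound _ _ (hN_memLp k) (hN_memLp m)
      rw [hN_sq, hN_sq] at this
      nlinarith [abs_nonneg (c k)])
  simp_rw [integral_const_mul, hN_orth] at key
  have e : ∀ x, Ser c x * hN m x = ∑' k, c k * (hN k x * hN m x) := by
    intro x
    unfold Ser
    rw [← tsum_mul_right]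
    congr 1; ext k; ring
  simp_rw [e]
  refine key.unique ?_
  have := hasSum_single (f := fun k => c k * (if m = k then (1:ℝ) else 0)) m
    (fun k hk => by simp [Ne.symm hk])
  simpa using this

lemma rapid_of_tendsto (c : ℕ → ℝ)
    (h : ∀ k : ℕ, Tendsto (fun m : ℕ => (m : ℝ) ^ k * c m) atTop (nhds 0)) : Rapid c := by
  intro k
  obtain ⟨C, hC⟩ := (h k).norm.bddAbove_range
  refine ⟨max (2 ^ k * C) |c 0|, fun m => ?_⟩
  rcases Nat.eq_zero_or_pos m with rfl | hm
  · simp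
  refine le_trans ?_ (le_max_left _ _)
  have h1 : |(m:ℝ) ^ k * c m| ≤ C := hC ⟨m, rfl⟩
  have hm' : (1:ℝ) ≤ m := by exact_mod_cast hm
  rw [abs_mul, abs_of_nonneg (by positivity)] at h1
  calc |c m| * ((m:ℝ) + 1) ^ k ≤ |c m| * (2 * (m:ℝ)) ^ k := by gcongr; linarith
    _ = 2 ^ k * ((m:ℝ) ^ k * |c m|) := by rw [mul_pow]; ring
    _ ≤ _ := by gcongr

theorem stmt3 (F : ℝ → ℝ) (hmeas : Measurable F) (hF : MemLp F 2 stdGaussian) :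
    (∀ k : ℕ, Tendsto (fun m : ℕ => (m : ℝ) ^ k * hermiteCoeff F m) atTop (nhds 0)) ↔
    (∃ G : ℝ → ℝ, (∀ n : ℕ, ContDiff ℝ n G) ∧ F =ᵐ[_root_.stdGaussian] G ∧
      ∀ n : ℕ, MemLp (iteratedDeriv n G) 2 stdGaussian) := by
  constructor
  · intro h
    have hc := rapid_of_tendsto _ h
    have hS := Ser_memLp hc
    have hSm : Measurable (Ser (hermiteCoeff F)) := (Ser_contDiff hc 0).continuous.measurable
    refine ⟨Ser (hermiteCoeff F), Ser_contDiff hc, ?_, fun n => ?_⟩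
    · have h0 := complete_He (F - Ser (hermiteCoeff F)) (hmeas.sub hSm) (hF.sub hS) (fun m => by
        have h1 := Ser_coeff hc m
        unfold hermiteCoeff at h1
        have hp : (√(m.factorial : ℝ))⁻¹ ≠ 0 := by positivity
        have h2 := mul_left_cancel₀ hp h1
        simp only [Pi.sub_apply, sub_mul]
        have i1 : Integrable (fun x => F x * He m x) stdGaussian := hF.integrable_mul (memLp_He m)
        have i2 : Integrable (fun x => Ser (hermiteCoeff F) x * He m x) stdGaussian :=
          hS.integrable_mul (memLp_He m)
        rw [integral_sub i1 i2, sub_eq_zero]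
        exact h2.symm)
      filter_upwards [h0] with x hx
      simpa [sub_eq_zero] using hx
    · rw [Ser_iteratedDeriv hc]
      exact Ser_memLp (hc.iter n)
  · rintro ⟨G, hG, hFG, hL⟩ k
    have : hermiteCoeff F = hermiteCoeff G := by
      ext m
      unfold hermiteCoeff
      congr 1
      exact integral_congr_ae (hFG.mono fun x hx => by simp only [hx])
    rw [this]
    exact dir2 G hG hL k
end

section
/- Let F : ℝ → ℝ satisfy Assumption 1.2 with parameters κ ∈ (0,1/4) and ε : ℕ → ℝ. Then for every γ > 0 there exists a constant C = C(γ, F) > 0 such that for every k ∈ ℕ one has Σ_{m ≥ 1} m^k |ĉ_m(F)| ≤ C · exp(exp(γ k)). -/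
open MeasureTheory ProbabilityTheory Real Filter

open Polynomial in
lemma aux_poly_int (p : ℝ[X]) {b : ℝ} (hb : 0 < b) :
    Integrable (fun x : ℝ => p.eval x * Real.exp (-b * x ^ 2)) := by
  induction p using Polynomial.induction_on' with
  | add p q hp hq =>
    refine (hp.add hq).congr (ae_of_all _ fun x => ?_)
    simp [add_mul]
  | monomial n a =>
    have h := (integrable_rpow_mul_exp_neg_mul_sq hb (s := (n : ℝ))
      (by have : (0 : ℝ) ≤ n := Nat.cast_nonneg n
          linarith)).const_mul a
    simpa [Real.rpow_natCast, mul_assoc] using h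

lemma aux_He_eval (m : ℕ) (x : ℝ) :
    He m x = ((Polynomial.hermite m).map (Int.castRingHom ℝ)).eval x := by
  simp [He, Polynomial.aeval_def, Polynomial.eval_map]

lemma aux_He_cont (m : ℕ) : Continuous (He m) := by
  have : He m = fun x => ((Polynomial.hermite m).map (Int.castRingHom ℝ)).eval x :=
    funext (aux_He_eval m)
  rw [this]
  exact Polynomial.continuous _

open Polynomial in
lemma aux_deriv_hermite (n : ℕ) :
    derivative (hermite (n + 1)) = ((n : ℤ[X]) + 1) * hermite n := by
  induction n with
  | zero => simp [hermite_succ]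
  | succ n ih =>
    rw [hermite_succ (n + 1)]
    simp only [derivative_sub, derivative_mul, derivative_X, ih, derivative_natCast,
      derivative_add, derivative_one]
    rw [hermite_succ n]
    push_cast
    ring

lemma aux_He_deriv (n : ℕ) (x : ℝ) :
    HasDerivAt (He (n + 1)) (((n : ℝ) + 1) * He n x) x := by
  have h := (Polynomial.hermite (n + 1)).hasDerivAt_aeval x
  rw [aux_deriv_hermite] at h
  refine (h.congr_deriv ?_ :)
  simp [He]

lemma aux_Hew_deriv (n : ℕ) (x : ℝ) :
    HasDerivAt (fun x => He n x * Real.exp (-(1/2) * x ^ 2))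
      (-(He (n + 1) x * Real.exp (-(1/2) * x ^ 2))) x := by
  have h := (Polynomial.hermite n).hasDerivAt_aeval x
  have h2 : HasDerivAt (fun x : ℝ => Real.exp (-(1/2) * x ^ 2))
      (Real.exp (-(1/2) * x ^ 2) * (-(1/2) * (2 * x))) x := by
    have := ((hasDerivAt_pow 2 x).const_mul (-(1/2) : ℝ)).exp
    simpa using this
  refine (h.mul h2).congr_deriv ?_
  simp only [He, Polynomial.hermite_succ, map_sub, map_mul, Polynomial.aeval_X]
  ring

lemma aux_ibp (u u' : ℝ → ℝ) (n : ℕ) (hu : ∀ x, HasDerivAt u (u' x) x)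
    (h1 : Integrable (fun x => u x * (He (n + 1) x * Real.exp (-(1/2) * x ^ 2))))
    (h2 : Integrable (fun x => u' x * (He n x * Real.exp (-(1/2) * x ^ 2))))
    (h3 : Integrable (fun x => u x * (He n x * Real.exp (-(1/2) * x ^ 2)))) :
    ∫ x, u x * (He (n + 1) x * Real.exp (-(1/2) * x ^ 2))
      = ∫ x, u' x * (He n x * Real.exp (-(1/2) * x ^ 2)) := by
  have h := integral_mul_deriv_eq_deriv_mul_of_integrable (u := u) (u' := u')
    (v := fun x => He n x * Real.exp (-(1/2) * x ^ 2))
    (v' := fun x => -(He (n + 1) x * Real.exp (-(1/2) * x ^ 2)))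
    (fun x _ => hu x) (fun x _ => aux_Hew_deriv n x)
    (by
      have := h1.neg
      refine this.congr (ae_of_all _ fun x => ?_)
      simp) h2 h3
  simp only [mul_neg, integral_neg] at h
  linarith

lemma aux_HeHe_int (i j : ℕ) :
    Integrable (fun x => He i x * (He j x * Real.exp (-(1/2) * x ^ 2))) := by
  have h := aux_poly_int (((Polynomial.hermite i).map (Int.castRingHom ℝ)) *
    ((Polynomial.hermite j).map (Int.castRingHom ℝ))) (b := 1/2) (by norm_num)
  refine h.congr (ae_of_all _ fun x => ?_)
  simp only [aux_He_eval, Polynomial.eval_mul, mul_assoc]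

lemma aux_norm (n : ℕ) :
    ∫ x, He n x * (He n x * Real.exp (-(1/2) * x ^ 2))
      = (n.factorial : ℝ) * ∫ x : ℝ, Real.exp (-(1/2) * x ^ 2) := by
  induction n with
  | zero => simp [He]
  | succ n ih =>
    rw [aux_ibp (He (n + 1)) (fun x => ((n : ℝ) + 1) * He n x) n (aux_He_deriv n)
      (aux_HeHe_int _ _) (by
        simpa [mul_assoc] using (aux_HeHe_int n n).const_mul ((n : ℝ) + 1)) (aux_HeHe_int _ _)]
    simp only [mul_assoc]
    rw [integral_const_mul, ih, Nat.factorial_succ]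
    push_cast
    ring

lemma aux_G_int {κ : ℝ} (hκ : κ < 1 / 4) (G : ℝ → ℝ) (hG : Continuous G) (B : ℝ)
    (hB : ∀ y, |G y| ≤ B * Real.exp (κ * y ^ 2)) (j : ℕ) :
    Integrable (fun x => G x * (He j x * Real.exp (-(1/2) * x ^ 2))) := by
  have h := ((aux_poly_int ((Polynomial.hermite j).map (Int.castRingHom ℝ)) (b := 1/2 - κ)
    (by linarith)).norm).const_mul B
  refine h.mono' ?_ (ae_of_all _ fun x => ?_)
  · have := aux_He_cont j
    exact Continuous.aestronglyMeasurable (by fun_prop)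
  · rw [← aux_He_eval]
    simp only [norm_mul, Real.norm_eq_abs, Real.abs_exp]
    have e : Real.exp (-(1/2 - κ) * x ^ 2)
        = Real.exp (κ * x ^ 2) * Real.exp (-(1/2) * x ^ 2) := by
      rw [← Real.exp_add]; ring_nf
    rw [e]
    calc _ ≤ (B * Real.exp (κ * x ^ 2)) * (|He j x| * Real.exp (-(1/2) * x ^ 2)) := by
          gcongr; exact hB x
      _ = _ := by ring

lemma aux_G_bound {κ : ℝ} (hκ : κ < 1 / 4) (G : ℝ → ℝ) (hG : Continuous G) (B : ℝ) (hB0 : 0 ≤ B)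
    (hB : ∀ y, |G y| ≤ B * Real.exp (κ * y ^ 2)) (j : ℕ) :
    |∫ x, G x * (He j x * Real.exp (-(1/2) * x ^ 2))| ≤
      Real.sqrt (j.factorial) * (B * ((∫ x : ℝ, Real.exp (-(1/2 - 2 * κ) * x ^ 2)) +
        ∫ x : ℝ, Real.exp (-(1/2) * x ^ 2))) := by
  set s := Real.sqrt (j.factorial) with hs
  have hs0 : 0 < s := Real.sqrt_pos.2 (by exact_mod_cast j.factorial_pos)
  have hs2 : s ^ 2 = j.factorial := Real.sq_sqrt (by positivity)
  have i1 : Integrable (fun x : ℝ => Real.exp (-(1/2 - 2 * κ) * x ^ 2)) :=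
    integrable_exp_neg_mul_sq (by linarith)
  have i2 := aux_HeHe_int j j
  have hle : ∫ x, |G x * (He j x * Real.exp (-(1/2) * x ^ 2))| ≤
      ∫ x, (s * B * Real.exp (-(1/2 - 2 * κ) * x ^ 2)
        + (B / s) * (He j x * (He j x * Real.exp (-(1/2) * x ^ 2)))) := by
    refine integral_mono (aux_G_int hκ G hG B hB j).abs
      ((i1.const_mul _).add (i2.const_mul _)) fun x => ?_
    simp only [abs_mul, Real.abs_exp]
    have e : Real.exp (-(1/2 - 2 * κ) * x ^ 2)
        = Real.exp (κ * x ^ 2) ^ 2 * Real.exp (-(1/2) * x ^ 2) := by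
      rw [← Real.exp_nat_mul, ← Real.exp_add]; push_cast; ring_nf
    rw [e]
    set w := Real.exp (-(1/2) * x ^ 2)
    set E := Real.exp (κ * x ^ 2)
    have hE : 0 < E := Real.exp_pos _
    have hw : 0 < w := Real.exp_pos _
    have key : E * |He j x| ≤ s * E ^ 2 + He j x ^ 2 / s := by
      have : s * E ^ 2 + He j x ^ 2 / s - E * |He j x|
          = ((s * E - |He j x| / 2) ^ 2 + 3 / 4 * |He j x| ^ 2) / s := by
        rw [← sq_abs (He j x)]
        field_simp
        ring
      have h2 : 0 ≤ ((s * E - |He j x| / 2) ^ 2 + 3 / 4 * |He j x| ^ 2) / s := by positivity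
      linarith
    calc |G x| * (|He j x| * w) ≤ (B * E) * (|He j x| * w) := by
          gcongr; exact hB x
      _ = B * w * (E * |He j x|) := by ring
      _ ≤ B * w * (s * E ^ 2 + He j x ^ 2 / s) := by gcongr
      _ = _ := by ring
  refine (abs_integral_le_integral_abs).trans (hle.trans (le_of_eq ?_))
  rw [integral_add (i1.const_mul _) (i2.const_mul _), integral_const_mul, integral_const_mul,
    aux_norm, ← hs2]
  field_simp

lemma aux_shift {κ : ℝ} (hκ : κ < 1 / 4) (F : ℝ → ℝ) (hF : ∀ n : ℕ, ContDiff ℝ n F) (B : ℕ → ℝ)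
    (hB : ∀ (n : ℕ) (y : ℝ), |iteratedDeriv n F y| ≤ B n * Real.exp (κ * y ^ 2)) (n : ℕ) :
    ∀ j : ℕ, ∫ x, F x * (He (j + n) x * Real.exp (-(1/2) * x ^ 2))
      = ∫ x, iteratedDeriv n F x * (He j x * Real.exp (-(1/2) * x ^ 2)) := by
  have hd : ∀ m, Differentiable ℝ (iteratedDeriv m F) := fun m =>
    (hF (m + 1)).differentiable_iteratedDeriv m (by exact_mod_cast Nat.lt_succ_self m)
  have hi := fun m j => aux_G_int hκ (iteratedDeriv m F) (hd m).continuous (B m) (hB m) j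
  induction n with
  | zero => intro j; simp
  | succ n ih =>
    intro j
    have := ih (j + 1)
    rw [show j + (n + 1) = j + 1 + n by ring, this]
    refine aux_ibp _ _ j (fun x => ?_) (hi n _) (hi (n + 1) _) (hi n _)
    rw [iteratedDeriv_succ]
    exact (hd n x).hasDerivAt

lemma aux_coeff (F : ℝ → ℝ) (m : ℕ) :
    hermiteCoeff F m = (Real.sqrt (Nat.factorial m))⁻¹ * ((Real.sqrt (2 * π))⁻¹ *
      ∫ x, F x * (He m x * Real.exp (-(1/2) * x ^ 2))) := by
  unfold hermiteCoeff _root_.stdGaussian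
  rw [integral_gaussianReal_eq_integral_smul one_ne_zero, ← integral_const_mul (Real.sqrt (2 * π))⁻¹]
  congr 1
  refine integral_congr_ae (ae_of_all _ fun x => ?_)
  simp only [gaussianPDFReal, smul_eq_mul, NNReal.coe_one, mul_one, sub_zero]
  rw [show -x ^ 2 / 2 = -(1/2) * x ^ 2 by ring]
  ring

lemma aux_desc (p n : ℕ) (hn : 1 ≤ n) (h : n ≤ p) : p ^ n ≤ n ^ n * p.descFactorial n := by
  calc p ^ n ≤ (n * (p + 1 - n)) ^ n := by
        gcongr
        obtain ⟨d, rfl⟩ := Nat.exists_eq_add_of_le h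
        rw [show n + d + 1 - n = d + 1 by omega]
        nlinarith
    _ = n ^ n * (p + 1 - n) ^ n := mul_pow _ _ _
    _ ≤ _ := by gcongr; exact Nat.pow_sub_le_descFactorial p n

lemma aux_term {κ : ℝ} (hκ : κ < 1 / 4) (F : ℝ → ℝ) (hF : ∀ n : ℕ, ContDiff ℝ n F) (B : ℕ → ℝ)
    (hB0 : ∀ n, 0 ≤ B n)
    (hB : ∀ (n : ℕ) (y : ℝ), |iteratedDeriv n F y| ≤ B n * Real.exp (κ * y ^ 2)) :
    ∃ A > 0, ∀ q m : ℕ, 1 ≤ q →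
      (m : ℝ) ^ q * |hermiteCoeff F m| ≤ A * (B 0 + B (2 * q)) * (2 * q : ℕ) ^ q := by
  set Z := ((∫ x : ℝ, Real.exp (-(1/2 - 2 * κ) * x ^ 2)) +
        ∫ x : ℝ, Real.exp (-(1/2) * x ^ 2)) with hZ
  have hZ0 : 0 ≤ Z := add_nonneg (integral_nonneg fun x => (Real.exp_pos _).le)
    (integral_nonneg fun x => (Real.exp_pos _).le)
  have hc : 0 < (Real.sqrt (2 * π))⁻¹ := by positivity
  set c := (Real.sqrt (2 * π))⁻¹ with hcdef
  have hd : ∀ m, Differentiable ℝ (iteratedDeriv m F) := fun m =>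
    (hF (m + 1)).differentiable_iteratedDeriv m (by exact_mod_cast Nat.lt_succ_self m)
  have main : ∀ n j : ℕ, |hermiteCoeff F (j + n)| * Real.sqrt ((j + n).factorial) ≤
      c * Z * B n * Real.sqrt (j.factorial) := by
    intro n j
    have hs : 0 < Real.sqrt ((j + n).factorial) :=
      Real.sqrt_pos.2 (by exact_mod_cast (j + n).factorial_pos)
    have hb := aux_G_bound hκ (iteratedDeriv n F) (hd n).continuous (B n) (hB0 n) (hB n) j
    rw [aux_coeff, aux_shift hκ F hF B hB n j, abs_mul, abs_mul, abs_of_pos (inv_pos.2 hs),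
      abs_of_pos hc]
    calc _ = c * |∫ x, iteratedDeriv n F x * (He j x * Real.exp (-(1/2) * x ^ 2))| := by
          field_simp
      _ ≤ c * _ := mul_le_mul_of_nonneg_left hb hc.le
      _ = _ := by rw [← hZ]; ring
  have hcZ : 0 ≤ c * Z := by positivity
  refine ⟨c * Z + 1, by positivity, fun q m hq => ?_⟩
  have hBB : 0 ≤ B 0 + B (2 * q) := add_nonneg (hB0 _) (hB0 _)
  suffices h : (m : ℝ) ^ q * |hermiteCoeff F m| ≤
      (c * Z) * (B 0 + B (2 * q)) * (2 * q : ℕ) ^ q by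
    refine h.trans ?_
    gcongr
    linarith
  rcases lt_or_ge m (2 * q) with hm | hm
  · have h0 := main 0 m
    have hs : 0 < Real.sqrt (m.factorial) :=
      Real.sqrt_pos.2 (by exact_mod_cast m.factorial_pos)
    have h1 : |hermiteCoeff F m| ≤ c * Z * B 0 := le_of_mul_le_mul_right h0 hs
    have h2 : c * Z * B 0 ≤ c * Z * (B 0 + B (2 * q)) := by
      gcongr; linarith [hB0 (2 * q)]
    have h3 : (m : ℝ) ≤ (2 * q : ℕ) := by exact_mod_cast hm.le
    calc _ ≤ ((2 * q : ℕ) : ℝ) ^ q * (c * Z * (B 0 + B (2 * q))) := by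
          gcongr; exact h1.trans h2
      _ = _ := by ring
  · have h0 := main (2 * q) (m - 2 * q)
    rw [Nat.sub_add_cancel hm] at h0
    have hfac := Nat.factorial_mul_descFactorial hm
    have hsq : Real.sqrt (m.factorial) =
        Real.sqrt ((m - 2 * q).factorial) * Real.sqrt (m.descFactorial (2 * q)) := by
      rw [← Real.sqrt_mul (by positivity), ← hfac]; push_cast; rfl
    have hs : 0 < Real.sqrt ((m - 2 * q).factorial) :=
      Real.sqrt_pos.2 (by exact_mod_cast (m - 2 * q).factorial_pos)
    rw [hsq] at h0
    set D := Real.sqrt (m.descFactorial (2 * q)) with hD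
    have h1 : |hermiteCoeff F m| * D ≤ c * Z * B (2 * q) := by
      refine le_of_mul_le_mul_right (le_trans (le_of_eq ?_) h0) hs
      ring
    have h2 : (m : ℝ) ^ q ≤ (2 * q : ℕ) ^ q * D := by
      have hdesc := aux_desc m (2 * q) (by omega) hm
      have : ((m : ℝ) ^ q) ^ 2 ≤ (((2 * q : ℕ) : ℝ) ^ q * D) ^ 2 := by
        rw [mul_pow, hD, Real.sq_sqrt (by positivity), ← pow_mul, ← pow_mul, mul_comm q 2]
        exact_mod_cast hdesc
      exact le_of_sq_le_sq this (by positivity)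
    calc _ ≤ ((2 * q : ℕ) ^ q * D) * |hermiteCoeff F m| := by gcongr
      _ = (2 * q : ℕ) ^ q * (|hermiteCoeff F m| * D) := by ring
      _ ≤ (2 * q : ℕ) ^ q * (c * Z * (B 0 + B (2 * q))) := by
          refine mul_le_mul_of_nonneg_left (h1.trans ?_) (by positivity)
          gcongr; linarith [hB0 0]
      _ = _ := by ring

lemma aux_growth (ε : ℕ → ℝ) (hε : Tendsto (fun n : ℕ => ε n / n) atTop (nhds 0)) (γ : ℝ)
    (hγ : 0 < γ) :
    ∃ C > 0, ∀ k : ℕ, (Real.exp (Real.exp (ε 0)) + Real.exp (Real.exp (ε (2 * (k + 2))))) *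
      ((2 * (k + 2) : ℕ) : ℝ) ^ (k + 2) ≤ C * Real.exp (Real.exp (γ * k)) := by
  set b0 := Real.exp (Real.exp (ε 0)) with hb0
  have hb0p : 0 < b0 := Real.exp_pos _
  have hev : ∀ᶠ k : ℕ in atTop, (b0 + Real.exp (Real.exp (ε (2 * (k + 2))))) *
      ((2 * (k + 2) : ℕ) : ℝ) ^ (k + 2) ≤ (b0 + 1) * Real.exp (Real.exp (γ * k)) := by
    have ht : Tendsto (fun k : ℕ => 2 * (k + 2)) atTop atTop :=
      tendsto_atTop_mono (fun k => (by omega : k ≤ 2 * (k + 2))) tendsto_id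
    have e1 := ht.eventually (hε.eventually (gt_mem_nhds (show (0 : ℝ) < γ / 8 by positivity)))
    have hg : Tendsto (fun k : ℕ => γ * (k : ℝ)) atTop atTop :=
      tendsto_natCast_atTop_atTop.const_mul_atTop hγ
    have e2 := hg.eventually (eventually_ge_atTop (2 * γ + 4))
    have e3 := ((isLittleO_pow_exp_pos_mul_atTop 2 hγ).comp_tendsto
      tendsto_natCast_atTop_atTop).def (show (0 : ℝ) < 1 / 64 by norm_num)
    filter_upwards [e1, e2, e3, eventually_ge_atTop 2] with k h1 h2 h3 hk
    have hk' : (2 : ℝ) ≤ k := by exact_mod_cast hk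
    set X := Real.exp (γ * k) with hX
    have hX0 : 0 < X := Real.exp_pos _
    have h3' : (k : ℝ) ^ 2 ≤ 1 / 64 * X := by
      simpa [abs_of_pos hX0] using h3
    have hpow : ((2 * (k + 2) : ℕ) : ℝ) ^ (k + 2) ≤ Real.exp (X / 2) := by
      have hle : ((2 * (k + 2) : ℕ) : ℝ) ≤ Real.exp (2 * (k + 2)) := by
        have := Real.add_one_le_exp (2 * ((k : ℝ) + 2))
        push_cast
        linarith
      calc _ ≤ (Real.exp (2 * (k + 2))) ^ (k + 2) := by gcongr
        _ = Real.exp ((k + 2) * (2 * (k + 2))) := by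
            rw [← Real.exp_nat_mul]; push_cast; ring_nf
        _ ≤ _ := by
            apply Real.exp_le_exp.2
            nlinarith
    have heps : Real.exp (ε (2 * (k + 2))) ≤ X / 2 := by
      have hpos : (0 : ℝ) < ((2 * (k + 2) : ℕ) : ℝ) := by positivity
      have h1' := (div_lt_iff₀ hpos).1 h1
      push_cast at h1'
      have : ε (2 * (k + 2)) ≤ γ * k - 1 := by nlinarith
      have h4 := Real.exp_le_exp.2 this
      rw [Real.exp_sub, ← hX] at h4
      refine h4.trans ?_
      have : (2 : ℝ) ≤ Real.exp 1 := by linarith [Real.add_one_le_exp (1 : ℝ)]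
      gcongr
    have hone : 1 ≤ Real.exp (X / 2) := Real.one_le_exp (by positivity)
    calc _ ≤ (b0 * Real.exp (X / 2) + Real.exp (X / 2)) * Real.exp (X / 2) := by
          gcongr
          exact le_mul_of_one_le_right hb0p.le hone
      _ = (b0 + 1) * (Real.exp (X / 2) * Real.exp (X / 2)) := by ring
      _ = _ := by rw [← Real.exp_add]; ring_nf
  have hO : (fun k : ℕ => (b0 + Real.exp (Real.exp (ε (2 * (k + 2))))) *
      ((2 * (k + 2) : ℕ) : ℝ) ^ (k + 2)) =O[atTop]
      (fun k : ℕ => Real.exp (Real.exp (γ * k))) := by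
    refine Asymptotics.IsBigO.of_bound (b0 + 1) ?_
    filter_upwards [hev] with k hk
    rw [Real.norm_of_nonneg (by positivity), Real.norm_of_nonneg (by positivity)]
    exact hk
  obtain ⟨C, hC, h⟩ := Asymptotics.bound_of_isBigO_nat_atTop hO
  refine ⟨C, hC, fun k => ?_⟩
  have := h (x := k) (Real.exp_pos _).ne'
  rw [Real.norm_of_nonneg (by positivity), Real.norm_of_nonneg (by positivity)] at this
  exact this

theorem stmt8 (κ : ℝ) (hκ : κ ∈ Set.Ioo (0 : ℝ) (1 / 4)) (ε : ℕ → ℝ)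
    (hε : Tendsto (fun n : ℕ => ε n / n) atTop (nhds 0))
    (F : ℝ → ℝ) (hF : ∀ n : ℕ, ContDiff ℝ n F)
    (hbound : ∀ (n : ℕ) (y : ℝ),
      |iteratedDeriv n F y| ≤ Real.exp (Real.exp (ε n)) * Real.exp (κ * y ^ 2)) :
    ∀ γ > (0 : ℝ), ∃ C > 0, ∀ k : ℕ,
      Summable (fun m : ℕ => ((m : ℝ) + 1) ^ k * |hermiteCoeff F (m + 1)|) ∧
      ∑' m : ℕ, ((m : ℝ) + 1) ^ k * |hermiteCoeff F (m + 1)|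
        ≤ C * Real.exp (Real.exp (γ * k)) := by
  intro γ hγ
  obtain ⟨A, hA, hterm⟩ := aux_term hκ.2 F hF (fun n => Real.exp (Real.exp (ε n)))
    (fun n => (Real.exp_pos _).le) hbound
  obtain ⟨C, hC, hgrow⟩ := aux_growth ε hε γ hγ
  have hS : Summable (fun m : ℕ => 1 / ((m : ℝ) + 1) ^ 2) := by
    have := (summable_nat_add_iff 1).2 (Real.summable_one_div_nat_pow.2 one_lt_two)
    simpa using this
  have hSpos : 0 < ∑' m : ℕ, 1 / ((m : ℝ) + 1) ^ 2 :=
    hS.tsum_pos (fun m => by positivity) 0 (by norm_num)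
  refine ⟨A * C * ∑' m : ℕ, 1 / ((m : ℝ) + 1) ^ 2, by positivity, fun k => ?_⟩
  have hle : ∀ m : ℕ, ((m : ℝ) + 1) ^ k * |hermiteCoeff F (m + 1)| ≤
      (A * C * Real.exp (Real.exp (γ * k))) * (1 / ((m : ℝ) + 1) ^ 2) := by
    intro m
    have h1 := hterm (k + 2) (m + 1) (by omega)
    have h2 := hgrow k
    have h3 : ((m : ℝ) + 1) ^ (k + 2) * |hermiteCoeff F (m + 1)| ≤
        A * C * Real.exp (Real.exp (γ * k)) := by
      calc _ ≤ A * ((Real.exp (Real.exp (ε 0)) + Real.exp (Real.exp (ε (2 * (k + 2))))) *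
            ((2 * (k + 2) : ℕ) : ℝ) ^ (k + 2)) := by
            rw [← mul_assoc]; exact_mod_cast h1
        _ ≤ A * (C * Real.exp (Real.exp (γ * k))) := by gcongr
        _ = _ := by ring
    rw [mul_one_div, le_div_iff₀ (by positivity)]
    refine le_trans (le_of_eq ?_) h3
    ring
  have hS' := hS.mul_left (A * C * Real.exp (Real.exp (γ * k)))
  have hsum : Summable (fun m : ℕ => ((m : ℝ) + 1) ^ k * |hermiteCoeff F (m + 1)|) :=
    Summable.of_nonneg_of_le (fun m => by positivity) hle hS'
  refine ⟨hsum, (hsum.tsum_le_tsum hle hS').trans (le_of_eq ?_)⟩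
  rw [tsum_mul_left]
  ring
end

section
/- Let κ ∈ (0, 1/4), k ∈ ℕ, and let F : ℝ → ℝ be k-times continuously differentiable such that, for every ℓ ≤ k, sup_{x ∈ ℝ} |F^(ℓ)(x)| e^{-κ x²} < ∞ and |F^(ℓ)(x)| e^{-κ x²} → 0 as |x| → ∞. Then there exists a sequence (P_M)_{M ≥ 1} of real polynomial functions such that for every ℓ ≤ k, sup_{x ∈ ℝ} |F^(ℓ)(x) − P_M^(ℓ)(x)| e^{-κ x²} → 0 as M → ∞. -/
open Filter

lemma aux_tail (r : ℝ) (hr : 0 ≤ r) (n : ℕ) :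
    Real.exp r - ∑ m ∈ Finset.range n, r ^ m / (m.factorial : ℝ)
      ≤ (1 / 2) ^ n * Real.exp (2 * r) := by
  have h1 := NormedSpace.expSeries_div_hasSum_exp (𝔸 := ℝ) r
  have h2 := (NormedSpace.expSeries_div_hasSum_exp (𝔸 := ℝ) (2 * r)).mul_left ((1 / 2 : ℝ) ^ n)
  rw [← Real.exp_eq_exp_ℝ] at h1 h2
  have h3 : HasSum (fun m => if m ∈ Finset.range n then r ^ m / (m.factorial : ℝ) else 0)
      (∑ m ∈ Finset.range n, r ^ m / (m.factorial : ℝ)) := by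
    have := hasSum_sum_of_ne_finset_zero (L := SummationFilter.unconditional ℕ)
      (f := fun m => if m ∈ Finset.range n then r ^ m / (m.factorial : ℝ) else 0)
      (s := Finset.range n) (by intro b hb; exact if_neg hb)
    convert this using 1
    exact Finset.sum_congr rfl fun m hm => (if_pos hm).symm
  have h4 := hasSum_le (fun m => ?_) h1 (h3.add h2)
  · linarith
  · by_cases hm : m ∈ Finset.range n
    · rw [if_pos hm]
      have : 0 ≤ (1 / 2 : ℝ) ^ n * ((2 * r) ^ m / (m.factorial : ℝ)) := by positivity
      linarith
    · rw [if_neg hm, zero_add, mul_pow]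
      have hm' : n ≤ m := by simpa using hm
      have : 1 ≤ (1 / 2 : ℝ) ^ n * 2 ^ m := by
        rw [one_div, inv_pow, ← div_eq_inv_mul, one_le_div (by positivity)]
        exact pow_le_pow_right₀ (by norm_num) hm'
      calc r ^ m / (m.factorial : ℝ) = 1 * (r ^ m / (m.factorial : ℝ)) := by ring
        _ ≤ ((1 / 2 : ℝ) ^ n * 2 ^ m) * (r ^ m / (m.factorial : ℝ)) := by gcongr
        _ = _ := by ring

/-- weighted approximability by complex polynomials -/
def WA (κ : ℝ) (f : ℝ → ℂ) : Prop :=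
  ∀ ε > (0 : ℝ), ∃ p : Polynomial ℂ, ∀ x : ℝ,
    ‖f x - p.eval (x : ℂ)‖ * Real.exp (-κ * x ^ 2) ≤ ε

lemma wa_exp (κ : ℝ) (hκ : 0 < κ) (z : ℂ) : WA κ (fun x : ℝ => Complex.exp (z * x)) := by
  intro ε hε
  obtain ⟨N, hN⟩ : ∃ N : ℕ, (1 / 2 : ℝ) ^ N < ε / Real.exp (‖z‖ ^ 2 / κ) :=
    exists_pow_lt_of_lt_one (by positivity) (by norm_num)
  rw [lt_div_iff₀ (Real.exp_pos _)] at hN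
  refine ⟨∑ n ∈ Finset.range N, Polynomial.C (z ^ n / (n.factorial : ℂ)) * Polynomial.X ^ n,
    fun x => ?_⟩
  have e1 : (∑ n ∈ Finset.range N,
      Polynomial.C (z ^ n / (n.factorial : ℂ)) * Polynomial.X ^ n).eval (x : ℂ)
      = ∑ n ∈ Finset.range N, (z * x) ^ n / (n.factorial : ℂ) := by
    rw [Polynomial.eval_finsetSum]
    refine Finset.sum_congr rfl fun n _ => ?_
    simp [mul_pow]; ring
  rw [e1]
  have h1 := (Complex.norm_exp_sub_sum_le_exp_norm_sub_sum (z * x) N).trans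
    (aux_tail _ (norm_nonneg _) N)
  calc _ ≤ ((1 / 2) ^ N * Real.exp (2 * ‖z * x‖)) * Real.exp (-κ * x ^ 2) := by gcongr
    _ = (1 / 2) ^ N * Real.exp (2 * ‖z * x‖ + -κ * x ^ 2) := by rw [Real.exp_add]; ring
    _ ≤ (1 / 2) ^ N * Real.exp (‖z‖ ^ 2 / κ) := by
      gcongr
      rw [norm_mul, Complex.norm_real, Real.norm_eq_abs, le_div_iff₀ hκ, ← sq_abs x]
      nlinarith [sq_nonneg (‖z‖ - κ * |x|)]
    _ ≤ ε := hN.le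

lemma wa_limit (κ : ℝ) (f : ℝ → ℂ)
    (h : ∀ ε > (0 : ℝ), ∃ g, WA κ g ∧ ∀ x, ‖f x - g x‖ * Real.exp (-κ * x ^ 2) ≤ ε) :
    WA κ f := by
  intro ε hε
  obtain ⟨g, hg, hfg⟩ := h (ε / 2) (by positivity)
  obtain ⟨p, hp⟩ := hg (ε / 2) (by positivity)
  refine ⟨p, fun x => ?_⟩
  have h1 := norm_sub_le_norm_sub_add_norm_sub (f x) (g x) (p.eval (x : ℂ))
  calc _ ≤ (‖f x - g x‖ + ‖g x - p.eval (x : ℂ)‖) * Real.exp (-κ * x ^ 2) := by gcongr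
    _ ≤ ε := by linarith [hfg x, hp x]

lemma wa_add (κ : ℝ) (f g : ℝ → ℂ) (hf : WA κ f) (hg : WA κ g) :
    WA κ (fun x => f x + g x) := by
  intro ε hε
  obtain ⟨p, hp⟩ := hf (ε / 2) (by positivity)
  obtain ⟨q, hq⟩ := hg (ε / 2) (by positivity)
  refine ⟨p + q, fun x => ?_⟩
  have h1 : ‖f x + g x - (p + q).eval (x : ℂ)‖
      ≤ ‖f x - p.eval (x : ℂ)‖ + ‖g x - q.eval (x : ℂ)‖ := by
    rw [Polynomial.eval_add, add_sub_add_comm]; exact norm_add_le _ _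
  calc _ ≤ (‖f x - p.eval (x : ℂ)‖ + ‖g x - q.eval (x : ℂ)‖) * Real.exp (-κ * x ^ 2) := by
        gcongr
    _ ≤ ε := by linarith [hp x, hq x]

lemma wa_smul (κ : ℝ) (c : ℂ) (f : ℝ → ℂ) (hf : WA κ f) : WA κ (fun x => c * f x) := by
  intro ε hε
  obtain ⟨p, hp⟩ := hf (ε / (‖c‖ + 1)) (by positivity)
  refine ⟨Polynomial.C c * p, fun x => ?_⟩
  have h := hp x
  rw [le_div_iff₀ (by positivity)] at h
  rw [Polynomial.eval_mul, Polynomial.eval_C, ← mul_sub, norm_mul]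
  have : 0 ≤ ‖f x - p.eval (x : ℂ)‖ * Real.exp (-κ * x ^ 2) := by positivity
  nlinarith

lemma exp_w_le_one (κ : ℝ) (hκ : 0 < κ) (x : ℝ) : Real.exp (-κ * x ^ 2) ≤ 1 := by
  rw [Real.exp_le_one_iff]; nlinarith [sq_nonneg x]

lemma wa_circle (κ : ℝ) (hκ : 0 < κ) (T : ℝ) [hT : Fact (0 < T)] (f : C(AddCircle T, ℂ)) :
    WA κ (fun x : ℝ => f (x : AddCircle T)) := by
  apply wa_limit
  intro ε hε
  have hf : f ∈ (Submodule.span ℂ (Set.range <| @fourier T)).topologicalClosure := by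
    rw [span_fourier_closure_eq_top]; trivial
  have hf' : f ∈ closure (Submodule.span ℂ (Set.range <| @fourier T) : Set C(AddCircle T, ℂ)) := hf
  obtain ⟨g, hg, hfg⟩ := Metric.mem_closure_iff.1 hf' ε hε
  refine ⟨fun x => g (x : AddCircle T), ?_, fun x => ?_⟩
  · clear hfg
    refine Submodule.span_induction (p := fun (g : C(AddCircle T, ℂ)) _ =>
      WA κ (fun x : ℝ => g (x : AddCircle T))) ?_ ?_ ?_ ?_ hg
    · rintro _ ⟨n, rfl⟩
      have := wa_exp κ hκ (2 * Real.pi * Complex.I * n / T)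
      convert this using 2 with x
      rw [fourier_coe_apply]
      congr 1
      ring
    · intro ε hε
      exact ⟨0, fun x => by simpa using hε.le⟩
    · intro a b _ _ ha hb
      exact wa_add κ _ _ ha hb
    · intro c a _ ha
      exact wa_smul κ c _ ha
  · have h1 : ‖f x - g x‖ ≤ ε := by
      rw [← dist_eq_norm]
      exact (ContinuousMap.dist_apply_le_dist (x : AddCircle T)).trans hfg.le
    calc _ ≤ ε * 1 := by
          gcongr
          exact exp_w_le_one κ hκ x
      _ = ε := mul_one _

lemma wa_cpt (κ : ℝ) (hκ : 0 < κ) (g : ℝ → ℂ) (hg : Continuous g) (R : ℝ) (hR : 0 < R)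
    (hs : ∀ x, R ≤ |x| → g x = 0) : WA κ g := by
  apply wa_limit
  intro ε hε
  obtain ⟨B, hB⟩ := (isCompact_Icc (a := -R) (b := R)).exists_bound_of_continuousOn hg.continuousOn
  have hB0 : 0 ≤ B := (norm_nonneg _).trans (hB 0 ⟨by linarith, hR.le⟩)
  have hB' : ∀ x, ‖g x‖ ≤ B := by
    intro x
    by_cases hx : R ≤ |x|
    · rw [hs x hx]; simpa using hB0
    · exact hB x (abs_le.1 (not_le.1 hx).le)
  -- choose period
  obtain ⟨S, hRS, hS⟩ : ∃ S, R ≤ S ∧ B * Real.exp (-κ * S ^ 2) ≤ ε := by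
    have h1 : Tendsto (fun S : ℝ => B * Real.exp (-(κ * S ^ 2))) atTop (nhds (B * 0)) := by
      apply Tendsto.const_mul
      apply Real.tendsto_exp_neg_atTop_nhds_zero.comp
      exact (tendsto_pow_atTop (two_ne_zero)).const_mul_atTop hκ
    rw [mul_zero] at h1
    obtain ⟨S, h⟩ := ((h1.eventually (gt_mem_nhds hε)).and (eventually_ge_atTop R)).exists
    exact ⟨S, h.2, by rw [neg_mul]; exact h.1.le⟩
  have hS0 : 0 < S := hR.trans_le hRS
  haveI : Fact (0 < 2 * S) := ⟨by linarith⟩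
  have e : -S + 2 * S = S := by ring
  have hc : Continuous (AddCircle.liftIco (2 * S) (-S) g) := by
    apply AddCircle.liftIco_continuous
    · rw [e, hs S (by rwa [abs_of_pos hS0]), hs (-S) (by rwa [abs_neg, abs_of_pos hS0])]
    · exact hg.continuousOn
  refine ⟨_, wa_circle κ hκ (2 * S) ⟨_, hc⟩, fun x => ?_⟩
  change ‖g x - AddCircle.liftIco (2 * S) (-S) g (x : AddCircle (2 * S))‖ * _ ≤ ε
  by_cases hx : x ∈ Set.Ico (-S) (-S + 2 * S)
  · rw [AddCircle.liftIco_coe_apply hx]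
    simpa using hε.le
  · have hx' : S ≤ |x| := by
      by_contra! h
      rw [abs_lt] at h
      exact hx ⟨h.1.le, by rw [e]; exact h.2⟩
    rw [hs x (hRS.trans hx'), zero_sub, norm_neg]
    have h2 : ∀ y : AddCircle (2 * S), ‖AddCircle.liftIco (2 * S) (-S) g y‖ ≤ B := by
      intro y
      have : y ∈ ((↑) : ℝ → AddCircle (2 * S)) '' Set.Ico (-S) (-S + 2 * S) := by
        rw [AddCircle.coe_image_Ico_eq]; trivial
      obtain ⟨t, ht, rfl⟩ := this
      rw [AddCircle.liftIco_coe_apply ht]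
      exact hB' t
    refine le_trans ?_ hS
    have h3 : S ^ 2 ≤ x ^ 2 := by rw [← sq_abs x]; gcongr
    have h4 : Real.exp (-κ * x ^ 2) ≤ Real.exp (-κ * S ^ 2) := by
      apply Real.exp_le_exp.2; nlinarith
    exact mul_le_mul (h2 _) h4 (Real.exp_pos _).le hB0

lemma re_poly (p : Polynomial ℂ) : ∃ q : Polynomial ℝ, ∀ x : ℝ, q.eval x = (p.eval (x : ℂ)).re := by
  induction p using Polynomial.induction_on' with
  | add p q hp hq =>
    obtain ⟨a, ha⟩ := hp
    obtain ⟨b, hb⟩ := hq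
    exact ⟨a + b, fun x => by simp [ha, hb]⟩
  | monomial n c =>
    refine ⟨Polynomial.monomial n c.re, fun x => ?_⟩
    rw [Polynomial.eval_monomial, Polynomial.eval_monomial, ← Complex.ofReal_pow,
      Complex.re_mul_ofReal]

lemma base (κ : ℝ) (hκ : 0 < κ) (F : ℝ → ℝ) (hF : Continuous F)
    (hdec : Tendsto (fun x : ℝ => |F x| * Real.exp (-κ * x ^ 2)) (cocompact ℝ) (nhds 0))
    (ε : ℝ) (hε : 0 < ε) :
    ∃ p : Polynomial ℝ, ∀ x, |F x - p.eval x| * Real.exp (-κ * x ^ 2) ≤ ε := by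
  have hW : WA κ (fun x => (F x : ℂ)) := by
    apply wa_limit
    intro ε hε
    have h1 := hdec.eventually (gt_mem_nhds hε)
    rw [← Metric.cobounded_eq_cocompact] at h1
    obtain ⟨R, hR⟩ : ∃ R : ℝ, ∀ x : ℝ, R ≤ |x| → |F x| * Real.exp (-κ * x ^ 2) < ε := by
      rw [← comap_norm_atTop, eventually_comap, eventually_atTop] at h1
      obtain ⟨R, h⟩ := h1
      exact ⟨R, fun x hx => h _ hx x rfl⟩
    set χ : ℝ → ℝ := fun x => max 0 (min 1 (|R| + 1 - |x|)) with hχ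
    have hχ0 : ∀ x, 0 ≤ χ x := fun x => le_max_left _ _
    have hχ1 : ∀ x, χ x ≤ 1 := fun x => max_le zero_le_one (min_le_left _ _)
    have hχc : Continuous χ := by fun_prop
    refine ⟨fun x => ((χ x * F x : ℝ) : ℂ), ?_, fun x => ?_⟩
    · apply wa_cpt κ hκ _ (by fun_prop) (|R| + 1) (by positivity)
      intro x hx
      have : χ x = 0 := max_eq_left ((min_le_right _ _).trans (by linarith))
      simp [this]
    · rw [← Complex.ofReal_sub, Complex.norm_real, Real.norm_eq_abs]
      by_cases hx : R ≤ |x|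
      · refine le_trans (mul_le_mul_of_nonneg_right ?_ (Real.exp_pos _).le) (hR x hx).le
        rw [show F x - χ x * F x = (1 - χ x) * F x by ring, abs_mul,
          abs_of_nonneg (by linarith [hχ1 x])]
        exact mul_le_of_le_one_left (abs_nonneg _) (by linarith [hχ0 x])
      · have : χ x = 1 := by
          have : (1 : ℝ) ≤ |R| + 1 - |x| := by
            have := le_abs_self R
            linarith
          simp [hχ, min_eq_left this]
        simpa [this] using hε.le
  obtain ⟨p, hp⟩ := hW ε hε
  obtain ⟨q, hq⟩ := re_poly p
  refine ⟨q, fun x => le_trans ?_ (hp x)⟩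
  gcongr
  rw [hq]
  have := Complex.abs_re_le_norm ((F x : ℂ) - p.eval (x : ℂ))
  simpa using this

lemma antider (q : Polynomial ℝ) : ∃ p : Polynomial ℝ, Polynomial.derivative p = q := by
  induction q using Polynomial.induction_on' with
  | add p q hp hq =>
    obtain ⟨a, ha⟩ := hp
    obtain ⟨b, hb⟩ := hq
    exact ⟨a + b, by simp [ha, hb]⟩
  | monomial n c =>
    refine ⟨Polynomial.monomial (n + 1) (c / (n + 1)), ?_⟩
    rw [Polynomial.derivative_monomial]
    have : (n : ℝ) + 1 ≠ 0 := by positivity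
    simp; field_simp

lemma integ_bound_pos (κ : ℝ) (hκ : 0 < κ) (G G' : ℝ → ℝ) (hG : ∀ x, HasDerivAt G (G' x) x)
    (h0 : G 0 = 0) (ε : ℝ) (hε : 0 < ε) (hb : ∀ x, |G' x| * Real.exp (-κ * x ^ 2) ≤ ε)
    (x : ℝ) (hx : 0 ≤ x) :
    |G x| * Real.exp (-κ * x ^ 2) ≤ ε * (Real.exp κ * (1 + 1 / κ) + 1 / (2 * κ)) := by
  have hb' : ∀ t, |G' t| ≤ ε * Real.exp (κ * t ^ 2) := by
    intro t
    have := hb t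
    rw [neg_mul, Real.exp_neg, ← div_eq_mul_inv, div_le_iff₀ (Real.exp_pos _)] at this
    exact this
  have hBd : ∀ t : ℝ, HasDerivAt
      (fun t : ℝ => ε * (Real.exp κ * t + Real.exp (κ * t ^ 2) / (2 * κ)))
      (ε * (Real.exp κ + t * Real.exp (κ * t ^ 2))) t := by
    intro t
    have h1 : HasDerivAt (fun t : ℝ => κ * t ^ 2) (κ * (2 * t)) t := by
      simpa using (hasDerivAt_pow 2 t).const_mul κ
    have h2 := (((hasDerivAt_id t).const_mul (Real.exp κ)).add
      (h1.exp.div_const (2 * κ))).const_mul ε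
    refine h2.congr_deriv ?_
    simp only [mul_one]
    congr 2
    field_simp
  have h := image_norm_le_of_norm_deriv_right_le_deriv_boundary (f := G) (f' := G') (a := 0)
    (b := x) (fun t _ => (hG t).continuousAt.continuousWithinAt)
    (fun t _ => (hG t).hasDerivWithinAt)
    (B := fun t : ℝ => ε * (Real.exp κ * t + Real.exp (κ * t ^ 2) / (2 * κ)))
    (B' := fun t : ℝ => ε * (Real.exp κ + t * Real.exp (κ * t ^ 2)))
    (by rw [h0, norm_zero]; positivity) hBd
    (by
      intro t ht
      rw [Real.norm_eq_abs]
      refine (hb' t).trans ?_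
      gcongr
      have hp := Real.exp_pos (κ * t ^ 2)
      have ht0 := ht.1
      rcases le_total t 1 with h1 | h1
      · have : Real.exp (κ * t ^ 2) ≤ Real.exp κ := by
          apply Real.exp_le_exp.2
          have : t ^ 2 ≤ 1 := by nlinarith
          nlinarith
        nlinarith
      · nlinarith [Real.exp_pos κ])
    (Set.right_mem_Icc.2 hx)
  rw [Real.norm_eq_abs] at h
  rw [neg_mul, Real.exp_neg, ← div_eq_mul_inv, div_le_iff₀ (Real.exp_pos _)]
  refine h.trans ?_
  have hx1 : x ≤ (1 + 1 / κ) * Real.exp (κ * x ^ 2) := by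
    have h1 := Real.add_one_le_exp (κ * x ^ 2)
    have h2 : x ≤ 1 + x ^ 2 := by nlinarith [sq_nonneg (x - 1)]
    have h3 : (1 + 1 / κ) * (κ * x ^ 2 + 1) = κ * x ^ 2 + x ^ 2 + 1 + 1 / κ := by
      field_simp; ring
    have h4 : (1 + 1 / κ) * (κ * x ^ 2 + 1) ≤ (1 + 1 / κ) * Real.exp (κ * x ^ 2) := by gcongr
    have h5 : 0 < 1 / κ := by positivity
    have h6 : 0 ≤ κ * x ^ 2 := by positivity
    linarith
  have := mul_le_mul_of_nonneg_left hx1 (Real.exp_pos κ).le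
  calc ε * (Real.exp κ * x + Real.exp (κ * x ^ 2) / (2 * κ))
      ≤ ε * (Real.exp κ * ((1 + 1 / κ) * Real.exp (κ * x ^ 2))
        + Real.exp (κ * x ^ 2) / (2 * κ)) := by gcongr
    _ = _ := by ring

lemma integ_bound (κ : ℝ) (hκ : 0 < κ) (G G' : ℝ → ℝ) (hG : ∀ x, HasDerivAt G (G' x) x)
    (h0 : G 0 = 0) (ε : ℝ) (hε : 0 < ε) (hb : ∀ x, |G' x| * Real.exp (-κ * x ^ 2) ≤ ε)
    (x : ℝ) :
    |G x| * Real.exp (-κ * x ^ 2) ≤ ε * (Real.exp κ * (1 + 1 / κ) + 1 / (2 * κ)) := by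
  rcases le_total 0 x with hx | hx
  · exact integ_bound_pos κ hκ G G' hG h0 ε hε hb x hx
  · have := integ_bound_pos κ hκ (fun t => G (-t)) (fun t => - G' (-t))
      (fun t => by
        have := (hG (-t)).comp t (hasDerivAt_neg t)
        simpa [Function.comp_def] using this)
      (by simpa using h0) ε hε (fun t => by simpa using hb (-t)) (-x) (by linarith)
    simpa using this

lemma iter_poly (ℓ : ℕ) : ∀ p : Polynomial ℝ, iteratedDeriv ℓ (fun y => p.eval y)
    = fun y => (Polynomial.derivative^[ℓ] p).eval y := by
  induction ℓ with
  | zero => intro p; simp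
  | succ n ih =>
    intro p
    rw [iteratedDeriv_succ', Function.iterate_succ_apply, ← ih]
    congr 1
    ext x
    exact p.deriv

lemma main_ind (κ : ℝ) (hκ : 0 < κ) (k : ℕ) : ∀ (F : ℝ → ℝ), ContDiff ℝ k F →
    (∀ ℓ ≤ k, Tendsto (fun x : ℝ => |iteratedDeriv ℓ F x| * Real.exp (-κ * x ^ 2))
        (Filter.cocompact ℝ) (nhds 0)) → ∀ ε > (0 : ℝ), ∃ p : Polynomial ℝ, ∀ ℓ ≤ k, ∀ x : ℝ,
      |iteratedDeriv ℓ F x - (Polynomial.derivative^[ℓ] p).eval x|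
        * Real.exp (-κ * x ^ 2) ≤ ε := by
  induction k with
  | zero =>
    intro F hF hdec ε hε
    obtain ⟨p, hp⟩ := base κ hκ F hF.continuous (by simpa using hdec 0 le_rfl) ε hε
    refine ⟨p, fun ℓ hℓ x => ?_⟩
    obtain rfl : ℓ = 0 := by omega
    simpa using hp x
  | succ k ih =>
    intro F hF hdec ε hε
    have hF' : ContDiff ℝ (k + 1) F := by exact_mod_cast hF
    have hd : ContDiff ℝ k (deriv F) := (contDiff_succ_iff_deriv.1 hF').2.2
    have hdiff : Differentiable ℝ F := (contDiff_succ_iff_deriv.1 hF').1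
    set K := Real.exp κ * (1 + 1 / κ) + 1 / (2 * κ) with hK
    have hK0 : 0 < K := by positivity
    obtain ⟨q, hq⟩ := ih (deriv F) hd (fun ℓ hℓ => by
      have := hdec (ℓ + 1) (by omega)
      rwa [iteratedDeriv_succ'] at this) (min ε (ε / K)) (by positivity)
    obtain ⟨r, hr⟩ := antider q
    set p := r + Polynomial.C (F 0 - r.eval 0) with hp
    have hpd : Polynomial.derivative p = q := by simp [hp, hr]
    refine ⟨p, fun ℓ hℓ x => ?_⟩
    cases ℓ with
    | succ n =>
      rw [iteratedDeriv_succ', Function.iterate_succ_apply, hpd]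
      exact (hq n (by omega) x).trans (min_le_left _ _)
    | zero =>
      have := integ_bound κ hκ (fun x => F x - p.eval x) (fun x => deriv F x - q.eval x)
        (fun x => by
          have h1 := (hdiff x).hasDerivAt.sub (p.hasDerivAt x)
          rw [hpd] at h1
          exact h1)
        (by simp [hp]) (ε / K) (by positivity)
        (fun x => by simpa using (hq 0 (by omega) x).trans (min_le_right _ _)) x
      rw [← hK, div_mul_cancel₀ _ hK0.ne'] at this
      simpa using this

theorem stmt9 (κ : ℝ) (hκ : κ ∈ Set.Ioo (0 : ℝ) (1 / 4)) (k : ℕ) (F : ℝ → ℝ)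
    (hF : ContDiff ℝ k F)
    (hbdd : ∀ ℓ ≤ k, ∃ B : ℝ, ∀ x : ℝ, |iteratedDeriv ℓ F x| * Real.exp (-κ * x ^ 2) ≤ B)
    (hdec : ∀ ℓ ≤ k,
      Tendsto (fun x : ℝ => |iteratedDeriv ℓ F x| * Real.exp (-κ * x ^ 2))
        (Filter.cocompact ℝ) (nhds 0)) :
    ∃ P : ℕ → Polynomial ℝ, ∀ ℓ ≤ k, ∀ η > (0 : ℝ), ∃ M₀ : ℕ, ∀ M ≥ M₀, ∀ x : ℝ,
      |iteratedDeriv ℓ F x - iteratedDeriv ℓ (fun y => (P M).eval y) x|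
        * Real.exp (-κ * x ^ 2) ≤ η := by
  choose P hP using fun M : ℕ => main_ind κ hκ.1 k F hF hdec (1 / ((M : ℝ) + 1)) (by positivity)
  refine ⟨P, fun ℓ hℓ η hη => ?_⟩
  obtain ⟨M₀, hM₀⟩ := exists_nat_one_div_lt hη
  refine ⟨M₀, fun M hM x => ?_⟩
  rw [iter_poly]
  refine (hP M ℓ hℓ x).trans (le_trans ?_ hM₀.le)
  gcongr
end

section
/- Let σ > 0 and let π_σ denote the Gaussian measure on ℝ with mean 0 and variance σ². There exists a constant C = C(σ) > 0 such that for every continuously differentiable function G : ℝ → ℝ with G ∈ L²(π_σ) and G' ∈ L²(π_σ), one has sup_{x ∈ ℝ} |G(x)| e^{-x²/(2σ²)} ≤ C · (‖G‖_{L²(π_σ)} + ‖G'‖_{L²(π_σ)}). -/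
open MeasureTheory ProbabilityTheory

/-- The Gaussian measure `π_σ` on `ℝ` with mean `0` and variance `σ²`. -/
noncomputable def gaussMeasure (σ : ℝ) : Measure ℝ := gaussianReal 0 ((σ ^ 2).toNNReal)

lemma gm_int (σ : ℝ) (hσ : 0 < σ) (f : ℝ → ℝ) (hf : Integrable f (gaussMeasure σ)) :
    Integrable (fun y => gaussianPDFReal 0 ((σ ^ 2).toNNReal) y * f y) volume := by
  have hv : (σ ^ 2).toNNReal ≠ 0 := by
    have : 0 < σ ^ 2 := by positivity
    simpa using hσ.ne'
  unfold gaussMeasure at hf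
  rw [gaussianReal_of_var_ne_zero _ hv,
    integrable_withDensity_iff_integrable_smul' (measurable_gaussianPDF _ _)
      (by simp [gaussianPDF])] at hf
  simpa [toReal_gaussianPDF] using hf

lemma gm_eq (σ : ℝ) (hσ : 0 < σ) (f : ℝ → ℝ) :
    ∫ y, f y ∂(gaussMeasure σ) = ∫ y, gaussianPDFReal 0 ((σ ^ 2).toNNReal) y * f y := by
  have hv : (σ ^ 2).toNNReal ≠ 0 := by
    simpa using hσ.ne'
  unfold gaussMeasure
  rw [integral_gaussianReal_eq_integral_smul hv]
  simp

lemma sq_bound (G : ℝ → ℝ) (hG : ContDiff ℝ 1 G) (x : ℝ) :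
    G x ^ 2 ≤ ∫ s in (x-1)..x, (2 * G s ^ 2 + deriv G s ^ 2) := by
  have hc : Continuous G := hG.continuous
  have hc' : Continuous (deriv G) := hG.continuous_deriv le_rfl
  have key := intervalIntegral.integral_eq_sub_of_hasDerivAt (a := x - 1) (b := x)
    (f := fun s => (s - (x - 1)) * G s ^ 2)
    (f' := fun s => 1 * G s ^ 2 + (s - (x - 1)) * (2 * G s * deriv G s))
    (fun s _ => by
      have h1 := ((hG.differentiable (by norm_num)) s).hasDerivAt
      have := ((hasDerivAt_id s).sub_const (x - 1)).mul (h1.pow 2)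
      exact this.congr_deriv (by simp))
    (Continuous.intervalIntegrable (by fun_prop) _ _)
  have e : G x ^ 2 = ∫ s in (x-1)..x, (1 * G s ^ 2 + (s - (x - 1)) * (2 * G s * deriv G s)) := by
    rw [key]; ring
  rw [e]
  apply intervalIntegral.integral_mono_on (by linarith)
    (Continuous.intervalIntegrable (by fun_prop) _ _)
    (Continuous.intervalIntegrable (by fun_prop) _ _)
  rintro s ⟨h1, h2⟩
  have a1 : 0 ≤ s - (x - 1) := by linarith
  have a2 : s - (x - 1) ≤ 1 := by linarith
  nlinarith [sq_nonneg (G s - deriv G s), mul_nonneg a1 (sq_nonneg (G s - deriv G s)),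
    mul_nonneg (sub_nonneg.2 a2) (add_nonneg (sq_nonneg (G s)) (sq_nonneg (deriv G s)))]

theorem stmt10 (σ : ℝ) (hσ : 0 < σ) :
    ∃ C > 0, ∀ G : ℝ → ℝ, ContDiff ℝ 1 G →
      MemLp G 2 (gaussMeasure σ) → MemLp (deriv G) 2 (gaussMeasure σ) →
      ∀ x : ℝ,
        |G x| * Real.exp (-x ^ 2 / (2 * σ ^ 2)) ≤
          C * (Real.sqrt (∫ y, G y ^ 2 ∂gaussMeasure σ)
               + Real.sqrt (∫ y, deriv G y ^ 2 ∂gaussMeasure σ)) := by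
  obtain ⟨k, hk, hkp⟩ : ∃ k > 0, ∀ x t : ℝ, x - 1 ≤ t → t ≤ x →
      k * Real.exp (-x ^ 2 / (2 * σ ^ 2)) ^ 2 ≤ gaussianPDFReal 0 ((σ ^ 2).toNNReal) t := by
    refine ⟨(Real.sqrt (2 * Real.pi * σ ^ 2))⁻¹ * Real.exp (-1 / σ ^ 2), by positivity, ?_⟩
    intro x t h1 h2
    rw [gaussianPDFReal, Real.coe_toNNReal _ (sq_nonneg σ), ← Real.exp_nat_mul, mul_assoc,
      ← Real.exp_add]
    gcongr
    have e : -1 / σ ^ 2 + ((2 : ℕ) : ℝ) * (-x ^ 2 / (2 * σ ^ 2))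
        = (-(2 + 2 * x ^ 2)) / (2 * σ ^ 2) := by
      push_cast; field_simp; ring
    rw [e]
    gcongr
    have : (x - t) ^ 2 ≤ 1 := by nlinarith
    nlinarith [sq_nonneg (2 * x - t)]
  refine ⟨Real.sqrt (2 / k), by positivity, ?_⟩
  intro G hG h1 h2 x
  have hc : Continuous G := hG.continuous
  have hc' : Continuous (deriv G) := hG.continuous_deriv le_rfl
  have i1 := h1.integrable_sq
  have i2 := h2.integrable_sq
  set A := ∫ y, G y ^ 2 ∂gaussMeasure σ with hA
  set B := ∫ y, deriv G y ^ 2 ∂gaussMeasure σ with hB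
  have hA0 : 0 ≤ A := integral_nonneg fun y => sq_nonneg _
  have hB0 : 0 ≤ B := integral_nonneg fun y => sq_nonneg _
  set w := Real.exp (-x ^ 2 / (2 * σ ^ 2)) with hw
  have hAB : ∫ y, (2 * G y ^ 2 + deriv G y ^ 2) ∂gaussMeasure σ = 2 * A + B := by
    rw [integral_add (i1.const_mul 2) i2, integral_const_mul]
  have hi := gm_int σ hσ _ ((i1.const_mul 2).add i2)
  rw [gm_eq σ hσ] at hAB
  have main : k * w ^ 2 * G x ^ 2 ≤ 2 * A + B := by
    calc k * w ^ 2 * G x ^ 2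
        ≤ k * w ^ 2 * ∫ s in (x-1)..x, (2 * G s ^ 2 + deriv G s ^ 2) := by
          gcongr; exact sq_bound G hG x
      _ = ∫ s in (x-1)..x, k * w ^ 2 * (2 * G s ^ 2 + deriv G s ^ 2) := by
          rw [intervalIntegral.integral_const_mul]
      _ ≤ ∫ s in (x-1)..x, gaussianPDFReal 0 ((σ ^ 2).toNNReal) s *
            (2 * G s ^ 2 + deriv G s ^ 2) := by
          apply intervalIntegral.integral_mono_on (by linarith)
            (Continuous.intervalIntegrable (by fun_prop) _ _) hi.intervalIntegrable
          rintro s ⟨b1, b2⟩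
          exact mul_le_mul_of_nonneg_right (hkp x s b1 b2) (by positivity)
      _ ≤ 2 * A + B := by
          rw [← hAB, intervalIntegral.integral_of_le (by linarith)]
          exact setIntegral_le_integral hi (Filter.Eventually.of_forall fun s =>
            mul_nonneg (gaussianPDFReal_nonneg _ _ _) (by positivity))
  have hw0 : 0 < w := Real.exp_pos _
  refine (sq_le_sq₀ (by positivity) (by positivity)).1 ?_
  rw [mul_pow, mul_pow, sq_abs, Real.sq_sqrt (by positivity)]
  have e : G x ^ 2 * w ^ 2 ≤ (2 * A + B) / k := by
    rw [le_div_iff₀ hk]; linarith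
  have e2 : (2 * A + B) / k ≤ 2 / k * (A + B) := by
    rw [div_mul_eq_mul_div]; gcongr; linarith
  have e3 : A + B ≤ (Real.sqrt A + Real.sqrt B) ^ 2 := by
    nlinarith [Real.sq_sqrt hA0, Real.sq_sqrt hB0,
      mul_nonneg (Real.sqrt_nonneg A) (Real.sqrt_nonneg B)]
  exact e.trans (e2.trans (by gcongr))
end

section
/- For a > 0, the function F(x) = √(a + x²) on ℝ satisfies Assumption 1.2: F is infinitely differentiable and there exist κ ∈ (0, 1/4) and a function ε : ℕ → ℝ with ε(n)/n → 0 as n → ∞ such that |F^(n)(x)| ≤ exp(exp(ε(n))) · exp(κ x²) for every n ∈ ℕ and x ∈ ℝ. -/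
open Filter

theorem aux_cd (a : ℝ) (ha : 0 < a) (n : WithTop ℕ∞) :
    ContDiff ℝ n (fun x : ℝ => Real.sqrt (a + x ^ 2)) := by
  apply ContDiff.sqrt
  · fun_prop
  · intro x; positivity

theorem aux_hd (a : ℝ) (ha : 0 < a) (n : ℕ) (x : ℝ) :
    HasDerivAt (iteratedDeriv n (fun y : ℝ => Real.sqrt (a + y ^ 2)))
      (iteratedDeriv (n+1) (fun y : ℝ => Real.sqrt (a + y ^ 2)) x) x := by
  have h := (aux_cd a ha ((n+1 : ℕ) : WithTop ℕ∞)).differentiable_iteratedDeriv n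
    (by exact_mod_cast Nat.lt_succ_self n)
  rw [iteratedDeriv_succ]
  exact (h x).hasDerivAt

theorem aux_d1 (a : ℝ) (ha : 0 < a) (x : ℝ) :
    (a + x ^ 2) * iteratedDeriv 1 (fun y : ℝ => Real.sqrt (a + y ^ 2)) x
      = x * Real.sqrt (a + x ^ 2) := by
  have hp : 0 < a + x ^ 2 := by positivity
  have h1 : HasDerivAt (fun y : ℝ => a + y ^ 2) (2 * x) x := by
    simpa using (hasDerivAt_pow 2 x).const_add a
  have h2 := h1.sqrt hp.ne'
  rw [iteratedDeriv_one, h2.deriv]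
  have hs : 0 < Real.sqrt (a + x ^ 2) := Real.sqrt_pos.2 hp
  have h3 := Real.sq_sqrt hp.le
  field_simp
  rw [h3]

theorem aux_rec (a : ℝ) (ha : 0 < a) (n : ℕ) : ∀ x : ℝ,
    (a + x ^ 2) * iteratedDeriv (n+2) (fun y : ℝ => Real.sqrt (a + y ^ 2)) x
      + (2 * n + 1) * (x * iteratedDeriv (n+1) (fun y : ℝ => Real.sqrt (a + y ^ 2)) x)
      + ((n:ℝ)^2 - 1) * iteratedDeriv n (fun y : ℝ => Real.sqrt (a + y ^ 2)) x = 0 := by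
  have h1 : ∀ x : ℝ, HasDerivAt (fun y : ℝ => a + y ^ 2) (2 * x) x := fun x => by
    simpa using (hasDerivAt_pow 2 x).const_add a
  induction n with
  | zero =>
    intro x
    have e1 := (h1 x).mul (aux_hd a ha 1 x)
    have e2 := (hasDerivAt_id x).mul (aux_hd a ha 0 x)
    have e : ((fun y : ℝ => a + y ^ 2) * iteratedDeriv 1 (fun y : ℝ => Real.sqrt (a + y ^ 2)))
        = (id * iteratedDeriv 0 (fun y : ℝ => Real.sqrt (a + y ^ 2))) := by
      funext y
      simpa using aux_d1 a ha y
    rw [e] at e1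
    have := e1.unique e2
    simp only [id, zero_add, Nat.reduceAdd] at this ⊢
    push_cast
    linarith
  | succ n ih =>
    intro x
    have e1 := (((h1 x).mul (aux_hd a ha (n+2) x)).add
      (((hasDerivAt_id x).mul (aux_hd a ha (n+1) x)).const_mul (2 * (n:ℝ) + 1))).add
      ((aux_hd a ha n x).const_mul ((n:ℝ)^2 - 1))
    have e2 : HasDerivAt (fun _ : ℝ => (0:ℝ)) 0 x := hasDerivAt_const x 0
    have e3 := e2.congr_of_eventuallyEq (f₁ := _) (Eventually.of_forall ih)
    have := e1.unique e3
    simp only [id] at this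
    push_cast
    rw [show n + 1 + 2 = n + 2 + 1 by ring, show n + 1 + 1 = n + 2 by ring]
    rw [show n + 1 + 1 = n + 2 by ring] at this
    linarith

theorem aux_bound (a : ℝ) (ha : 0 < a) (M : ℝ) (hM : 1 ≤ M) (hMa : 1 ≤ M * a) (n : ℕ) : ∀ x : ℝ,
    |iteratedDeriv n (fun y : ℝ => Real.sqrt (a + y ^ 2)) x|
      ≤ (4 * M) ^ n * n.factorial * Real.sqrt (a + x ^ 2) := by
  have hM1 : ∀ x : ℝ, 1 ≤ M * (a + x ^ 2) := fun x => by nlinarith [sq_nonneg x]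
  have hM2 : ∀ x : ℝ, |x| ≤ M * (a + x ^ 2) := fun x => by
    nlinarith [sq_nonneg (|x| - 1), sq_abs x, sq_nonneg x]
  induction n using Nat.strong_induction_on with
  | _ n ih =>
  intro x
  have hp : 0 < a + x ^ 2 := by positivity
  have hs : 0 < Real.sqrt (a + x ^ 2) := Real.sqrt_pos.2 hp
  match n, ih with
  | 0, _ => simp [abs_of_pos hs]
  | 1, _ =>
    have h := aux_d1 a ha x
    have h' := congrArg abs h
    rw [abs_mul, abs_mul, abs_of_pos hp, abs_of_pos hs] at h'
    refine le_of_mul_le_mul_left ?_ hp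
    rw [h']
    have := mul_le_mul_of_nonneg_right (hM2 x) hs.le
    have h5 : 0 ≤ M * (a + x^2) * Real.sqrt (a + x ^ 2) := by positivity
    simp only [pow_one, Nat.factorial_one, Nat.cast_one]
    nlinarith
  | n+2, ih =>
    have i0 := ih n (by omega) x
    have i1 := ih (n+1) (by omega) x
    have h := aux_rec a ha n x
    set D2 := iteratedDeriv (n+2) (fun y : ℝ => Real.sqrt (a + y ^ 2)) x
    set D1 := iteratedDeriv (n+1) (fun y : ℝ => Real.sqrt (a + y ^ 2)) x
    set D0 := iteratedDeriv n (fun y : ℝ => Real.sqrt (a + y ^ 2)) x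
    set s := Real.sqrt (a + x ^ 2)
    set p := a + x ^ 2
    have hn : (0:ℝ) ≤ n := Nat.cast_nonneg n
    set Q := (4 * M) ^ n * n.factorial * s with hQ
    have hQ0 : 0 ≤ Q := by positivity
    have i1' : |D1| ≤ 4 * M * (n + 1) * Q := by
      refine i1.trans (le_of_eq ?_)
      rw [hQ, Nat.factorial_succ]; push_cast; ring
    have goal' : (4 * M) ^ (n+2) * (n+2).factorial * s = 16 * M^2 * ((n+2) * (n+1)) * Q := by
      rw [hQ, Nat.factorial_succ, Nat.factorial_succ]; push_cast; ring
    rw [goal']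
    refine le_of_mul_le_mul_left ?_ hp
    have e : p * D2 = -((2 * n + 1) * (x * D1)) + (-(((n:ℝ)^2 - 1) * D0)) := by linarith
    have e1 : p * |D2| = |p * D2| := by rw [abs_mul, abs_of_pos hp]
    rw [e1, e]
    refine (abs_add_le _ _).trans ?_
    rw [abs_neg, abs_neg, abs_mul, abs_mul, abs_mul, abs_of_nonneg (by positivity : (0:ℝ) ≤ 2 * n + 1)]
    have hc : |(n:ℝ)^2 - 1| ≤ ((n:ℝ) + 1)^2 := by
      rw [abs_le]; constructor <;> nlinarith
    have t1 : (2 * (n:ℝ) + 1) * (|x| * |D1|) ≤ (2 * (n + 2)) * ((M * p) * (4 * M * (n + 1) * Q)) := by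
      have := hM2 x
      gcongr
      linarith
    have t2 : |(n:ℝ)^2 - 1| * |D0| ≤ (n + 1)^2 * Q := by gcongr
    have t3 : ((n:ℝ) + 1)^2 * Q ≤ ((n + 2) * (n + 1) * Q) * (M * (M * p)) := by
      have h1 : ((n:ℝ) + 1)^2 * Q ≤ (n + 2) * (n + 1) * Q := by
        apply mul_le_mul_of_nonneg_right _ hQ0; nlinarith
      have h2 : 1 ≤ M * (M * p) := one_le_mul_of_one_le_of_one_le hM (hM1 x)
      refine h1.trans (le_mul_of_one_le_right (by positivity) h2)
    have t4 : 0 ≤ ((n + 2) * (n + 1) * Q) * (M * (M * p)) := by positivity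
    calc _ ≤ (2 * ((n:ℝ) + 2)) * ((M * p) * (4 * M * (n + 1) * Q))
          + ((n + 2) * (n + 1) * Q) * (M * (M * p)) := add_le_add t1 (t2.trans t3)
      _ = 9 * (((n + 2) * (n + 1) * Q) * (M * (M * p))) := by ring
      _ ≤ 16 * (((n + 2) * (n + 1) * Q) * (M * (M * p))) := by linarith
      _ = _ := by ring

theorem stmt12 (a : ℝ) (ha : 0 < a) :
    (∀ n : ℕ, ContDiff ℝ n (fun x : ℝ => Real.sqrt (a + x ^ 2))) ∧
    ∃ κ ∈ Set.Ioo (0 : ℝ) (1 / 4), ∃ ε : ℕ → ℝ,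
      Tendsto (fun n : ℕ => ε n / n) atTop (nhds 0) ∧
      ∀ (n : ℕ) (x : ℝ),
        |iteratedDeriv n (fun y : ℝ => Real.sqrt (a + y ^ 2)) x|
          ≤ Real.exp (Real.exp (ε n)) * Real.exp (κ * x ^ 2) := by
  refine ⟨fun n => aux_cd a ha n, 1/8, by constructor <;> norm_num, ?_⟩
  obtain ⟨M, hM, hMa⟩ : ∃ M : ℝ, 1 ≤ M ∧ 1 ≤ M * a := by
    refine ⟨max 1 (1/a), le_max_left _ _, ?_⟩
    have := mul_le_mul_of_nonneg_right (le_max_right 1 (1/a)) ha.le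
    rwa [one_div_mul_cancel ha.ne'] at this
  set K : ℝ := a + 9 with hK
  have hK0 : 0 < K := by positivity
  set L : ℝ := 4 * M + 1 + K with hL
  have hL0 : 0 < L := by positivity
  refine ⟨fun n => Real.log L + 4 * Real.sqrt n, ?_, ?_⟩
  · have h1 : Tendsto (fun n : ℕ => Real.log L / (n:ℝ)) atTop (nhds 0) :=
      tendsto_const_nhds.div_atTop tendsto_natCast_atTop_atTop
    have h2 : Tendsto (fun n : ℕ => 4 / Real.sqrt (n:ℝ)) atTop (nhds 0) :=
      tendsto_const_nhds.div_atTop (Real.tendsto_sqrt_atTop.comp tendsto_natCast_atTop_atTop)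
    have h3 := h1.add h2
    rw [add_zero] at h3
    refine h3.congr fun n => ?_
    rw [add_div, mul_div_assoc, Real.sqrt_div_self', mul_one_div]
  · intro n x
    refine (aux_bound a ha M hM hMa n x).trans ?_
    have hn : (0:ℝ) ≤ n := Nat.cast_nonneg n
    have s1 : Real.sqrt (a + x ^ 2) ≤ K * Real.exp (1/8 * x ^ 2) := by
      have h1 : Real.sqrt (a + x ^ 2) ≤ 1 + (a + x ^ 2) := by
        rw [Real.sqrt_le_left (by positivity)]
        nlinarith [sq_nonneg x, sq_nonneg (a + x ^ 2)]
      have h2 := Real.add_one_le_exp (1/8 * x ^ 2)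
      have h3 : K * (1/8 * x ^ 2 + 1) ≤ K * Real.exp (1/8 * x ^ 2) := by gcongr
      nlinarith [mul_nonneg ha.le (sq_nonneg x), sq_nonneg x]
    have f1 : (4 * M) ^ n ≤ Real.exp (n * (4 * M)) := by
      rw [Real.exp_nat_mul]
      have := Real.add_one_le_exp (4 * M)
      gcongr; linarith
    have f2 : (n.factorial : ℝ) ≤ Real.exp (n * n) := by
      rw [Real.exp_nat_mul]
      have h1 : (n.factorial : ℝ) ≤ (n:ℝ) ^ n := by exact_mod_cast Nat.factorial_le_pow n
      have := Real.add_one_le_exp (n:ℝ)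
      refine h1.trans ?_
      gcongr; linarith
    have f3 : K ≤ Real.exp K := by linarith [Real.add_one_le_exp K]
    have f4 : n * (4 * M) + n * n + K ≤ Real.exp (Real.log L + 4 * Real.sqrt n) := by
      rw [Real.exp_add, Real.exp_log hL0]
      have h1 : Real.exp (4 * Real.sqrt n) = Real.exp (Real.sqrt n) ^ 4 := by
        rw [← Real.exp_nat_mul]; norm_num
      have h2 : ((n:ℝ) + 1) ^ 2 ≤ Real.exp (4 * Real.sqrt n) := by
        rw [h1]
        have h3 := Real.add_one_le_exp (Real.sqrt n)
        have h4 := Real.sqrt_nonneg (n:ℝ)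
        have h5 : (n:ℝ) + 1 ≤ Real.exp (Real.sqrt n) ^ 2 := by
          nlinarith [Real.sq_sqrt hn]
        calc ((n:ℝ) + 1) ^ 2 ≤ (Real.exp (Real.sqrt n) ^ 2) ^ 2 := by gcongr
          _ = _ := by ring
      have h3 : L * ((n:ℝ) + 1) ^ 2 ≤ L * Real.exp (4 * Real.sqrt n) := by gcongr
      refine le_trans ?_ h3
      have hM0 : 0 ≤ M := by linarith
      rw [hL]
      have q1 : 0 ≤ M * n := by positivity
      have q2 : 0 ≤ M * n^2 := by positivity
      have q3 : 0 ≤ K * n := by positivity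
      have q4 : 0 ≤ K * n^2 := by positivity
      nlinarith
    calc (4 * M) ^ n * n.factorial * Real.sqrt (a + x ^ 2)
        ≤ Real.exp (n * (4 * M)) * Real.exp (n * n) * (Real.exp K * Real.exp (1/8 * x ^ 2)) := by
          have s2 : Real.sqrt (a + x ^ 2) ≤ Real.exp K * Real.exp (1/8 * x ^ 2) :=
            s1.trans (by gcongr)
          gcongr
      _ = Real.exp (n * (4 * M) + n * n + K) * Real.exp (1/8 * x ^ 2) := by
          rw [Real.exp_add _ K, Real.exp_add (n * (4 * M))]; ring
      _ ≤ _ := by gcongr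
end

section
/- Let γ > 0 and δ ∈ (0, e^{-1}), and let F : ℝ → ℝ be an infinitely differentiable function such that F^(j)(0) = 0 for every j ∈ ℕ and F(x) = exp(−γ · log(1/x) · log(log(1/x))) (i.e. F(x) = x^{γ log log(1/x)}) for all x ∈ (0, δ]. Then for every c ∈ (0, 1/γ) there exists N ∈ ℕ such that for every n ≥ N, sup_{x ∈ [0, δ]} |F^(n)(x)| ≥ exp(exp(c n)). In particular, such an F does not satisfy Assumption 1.2. -/
open Filter

theorem stmt14 (γ δ : ℝ) (hγ : 0 < γ) (hδ : δ ∈ Set.Ioo (0 : ℝ) (Real.exp (-1)))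
    (F : ℝ → ℝ) (hF : ∀ n : ℕ, ContDiff ℝ n F)
    (hflat : ∀ j : ℕ, iteratedDeriv j F 0 = 0)
    (hform : ∀ x ∈ Set.Ioc (0 : ℝ) δ,
      F x = Real.exp (-(γ * Real.log (1 / x) * Real.log (Real.log (1 / x))))) :
    (∀ c ∈ Set.Ioo (0 : ℝ) (1 / γ), ∃ N : ℕ, ∀ n ≥ N, ∃ x ∈ Set.Icc (0 : ℝ) δ,
      Real.exp (Real.exp (c * n)) ≤ |iteratedDeriv n F x|) ∧
    ¬ (∃ κ ∈ Set.Ioo (0 : ℝ) (1 / 4), ∃ ε : ℕ → ℝ,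
        Tendsto (fun n : ℕ => ε n / n) atTop (nhds 0) ∧
        ∀ (n : ℕ) (y : ℝ),
          |iteratedDeriv n F y| ≤ Real.exp (Real.exp (ε n)) * Real.exp (κ * y ^ 2)) := by
  obtain ⟨hδ0, hδ1⟩ := hδ
  have key : ∀ c ∈ Set.Ioo (0 : ℝ) (1 / γ), ∃ N : ℕ, ∀ n ≥ N, ∃ x ∈ Set.Icc (0 : ℝ) δ,
      Real.exp (Real.exp (c * n)) ≤ |iteratedDeriv n F x| := by
    rintro c ⟨hc0, hc1⟩
    have hcγ : 0 < 1 - γ * c := by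
      rw [lt_div_iff₀ hγ] at hc1; linarith
    have hn : Tendsto (fun n : ℕ => (n : ℝ)) atTop atTop := tendsto_natCast_atTop_atTop
    have e1 : ∀ᶠ n : ℕ in atTop, 1 / (1 - γ * c) ≤ (n : ℝ) := hn.eventually_ge_atTop _
    have e2 : ∀ᶠ n : ℕ in atTop, -Real.log δ ≤ Real.exp (c * n) :=
      (Real.tendsto_exp_atTop.comp (hn.const_mul_atTop hc0)).eventually_ge_atTop _
    obtain ⟨N, hN⟩ := eventually_atTop.1 ((e1.and e2).and (eventually_ge_atTop 1))
    refine ⟨N, fun n hnN => ?_⟩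
    obtain ⟨⟨h1, h2⟩, h3⟩ := hN n hnN
    obtain ⟨m, rfl⟩ : ∃ m, n = m + 1 := ⟨n - 1, by omega⟩
    set L := Real.exp (c * ((m + 1 : ℕ) : ℝ)) with hL
    have hL0 : 0 < L := Real.exp_pos _
    set x := Real.exp (-L) with hx
    have hx0 : 0 < x := Real.exp_pos _
    have hxδ : x ≤ δ := by
      rw [← Real.exp_log hδ0, hx]
      exact Real.exp_le_exp.2 (by linarith)
    have hlog : Real.log (1 / x) = L := by
      rw [hx, one_div, Real.log_inv, Real.log_exp, neg_neg]
    have hFx := hform x ⟨hx0, hxδ⟩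
    rw [hlog, hL, Real.log_exp, ← hL] at hFx
    have hu := uniqueDiffOn_Icc hx0
    obtain ⟨y, hy, hT⟩ := taylor_mean_remainder_lagrange_iteratedDeriv (n := m) hx0.ne
      (hF (m + 1)).contDiffOn
    have hz : taylorWithinEval F m (Set.Icc 0 x) 0 x = 0 := by
      rw [taylor_within_apply]
      refine Finset.sum_eq_zero fun k _ => ?_
      rw [iteratedDerivWithin_eq_iteratedDeriv hu (hF k).contDiffAt
        (Set.left_mem_Icc.2 hx0.le), hflat, smul_zero]
    rw [Set.uIoo_of_lt hx0] at hy
    rw [Set.uIcc_of_le hx0.le, hz, sub_zero, sub_zero] at hT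
    refine ⟨y, ⟨hy.1.le, hy.2.le.trans hxδ⟩, ?_⟩
    have hp : 0 < x ^ (m + 1) := by positivity
    have hf : (1 : ℝ) ≤ ((m + 1).factorial : ℝ) := by
      exact_mod_cast Nat.succ_le_of_lt (Nat.factorial_pos _)
    have hle : F x ≤ |iteratedDeriv (m + 1) F y| * x ^ (m + 1) := by
      rw [hT]
      refine (div_le_div_of_nonneg_right (mul_le_mul_of_nonneg_right (le_abs_self _) hp.le)
        (by positivity)).trans (div_le_self (by positivity) hf)
    refine le_of_mul_le_mul_right (le_trans ?_ hle) hp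
    rw [hFx, hx, ← Real.exp_nat_mul, ← Real.exp_add]
    apply Real.exp_le_exp.2
    rw [div_le_iff₀ hcγ] at h1
    nlinarith [mul_le_mul_of_nonneg_left h1 hL0.le]
  refine ⟨key, ?_⟩
  rintro ⟨κ, ⟨hκ0, hκ1⟩, ε, hε, hb⟩
  have hc0 : 0 < 1 / (2 * γ) := by positivity
  have hc1 : 1 / (2 * γ) < 1 / γ := one_div_lt_one_div_of_lt hγ (by linarith)
  obtain ⟨N, hN⟩ := key _ ⟨hc0, hc1⟩
  set c := 1 / (2 * γ)
  have hn : Tendsto (fun n : ℕ => (n : ℝ)) atTop atTop := tendsto_natCast_atTop_atTop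
  have e2 : ∀ᶠ n : ℕ in atTop, 2 ≤ Real.exp (c / 2 * n) :=
    (Real.tendsto_exp_atTop.comp (hn.const_mul_atTop (half_pos hc0))).eventually_ge_atTop _
  have e3 := hε.eventually_lt_const (half_pos hc0)
  obtain ⟨n, ⟨⟨h2, h3⟩, h4⟩, h5⟩ :=
    (((e2.and e3).and (eventually_ge_atTop N)).and (eventually_gt_atTop 0)).exists
  have hnpos : (0 : ℝ) < n := by exact_mod_cast h5
  rw [div_lt_iff₀ hnpos] at h3
  obtain ⟨y, hy, hy2⟩ := hN n h4
  have h6 := hy2.trans (hb n y)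
  rw [← Real.exp_add, Real.exp_le_exp] at h6
  have hy1 : y ≤ 1 := hy.2.trans (hδ1.le.trans (Real.exp_le_one_iff.2 (by norm_num)))
  have hyy : y ^ 2 ≤ 1 := pow_le_one₀ hy.1 hy1
  have h7 := Real.exp_le_exp.2 h3.le
  have h8 : Real.exp (c * n) = Real.exp (c / 2 * n) * Real.exp (c / 2 * n) := by
    rw [← Real.exp_add]; ring_nf
  have h9 : κ * y ^ 2 ≤ 1 := by nlinarith [sq_nonneg y]
  nlinarith
end

section
/- Let (Ω, 𝔉, P) be a probability space, let κ ∈ (0, 1/2), α > 4κ, C₀ > 0, and let (S_k)_{k ∈ ℤ²} be a family of nonnegative random variables on Ω such that P(S_k > A) ≤ C₀ e^{-A²/2} for every k ∈ ℤ² and every A > 0. Then E[ sup_{k ∈ ℤ²} e^{κ S_k²} ⟨k⟩^{-α} ] < ∞, where ⟨k⟩ = (1 + |k|²)^{1/2} and |k| is the Euclidean norm of k ∈ ℤ² ⊂ ℝ². -/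
open MeasureTheory

lemma aux_sum (s : ℝ) (hs : 2 < s) :
    Summable (fun k : ℤ × ℤ =>
      ((1 + ((k.1 : ℝ) ^ 2 + (k.2 : ℝ) ^ 2)) ^ ((1 : ℝ) / 2)) ^ (-s)) := by
  rw [← (finTwoArrowEquiv ℤ).summable_iff]
  refine Summable.of_norm_bounded_eventually (EisensteinSeries.summable_one_div_norm_rpow hs) ?_
  have h0 : ({0}ᶜ : Set (Fin 2 → ℤ)) ∈ Filter.cofinite :=
    (Set.finite_singleton _).compl_mem_cofinite
  filter_upwards [h0] with x hx
  have hx : x ≠ 0 := hx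
  have hpos : 0 < ‖x‖ := norm_pos_iff.mpr hx
  change ‖((1 + ((x 0 : ℝ) ^ 2 + (x 1 : ℝ) ^ 2)) ^ ((1 : ℝ) / 2)) ^ (-s)‖ ≤ ‖x‖ ^ (-s)
  have hB : 0 ≤ ((1 + ((x 0 : ℝ) ^ 2 + (x 1 : ℝ) ^ 2)) ^ ((1 : ℝ) / 2)) := by positivity
  rw [Real.norm_of_nonneg (Real.rpow_nonneg hB _)]
  apply Real.rpow_le_rpow_of_nonpos hpos _ (by linarith)
  rw [← Real.sqrt_eq_rpow]
  rw [pi_norm_le_iff_of_nonneg (Real.sqrt_nonneg _)]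
  intro i
  apply Real.le_sqrt_of_sq_le
  rw [Int.norm_eq_abs, sq_abs]
  fin_cases i
  · simp; nlinarith [sq_nonneg (x 0 : ℝ), sq_nonneg (x 1 : ℝ)]
  · simp; nlinarith [sq_nonneg (x 0 : ℝ), sq_nonneg (x 1 : ℝ)]

lemma aux_exp (c C₀ : ℝ) (hc : 0 < c) (hc2 : c < 1 / 2) (hC₀ : 0 < C₀) :
    ∃ M : ENNReal, M ≠ ⊤ ∧ ∀ {Ω : Type*} [MeasurableSpace Ω] (P : Measure Ω)
      [IsProbabilityMeasure P] (S : Ω → ℝ), Measurable S → (∀ ω, 0 ≤ S ω) →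
      (∀ A > (0 : ℝ), P {ω | A < S ω} ≤ ENNReal.ofReal (C₀ * Real.exp (-A ^ 2 / 2))) →
      ∫⁻ ω, ENNReal.ofReal (Real.exp (c * S ω ^ 2)) ∂P ≤ M := by
  have hexp : -(1 / (2 * c)) < -1 := by
    rw [neg_lt_neg_iff, lt_div_iff₀ (by positivity)]; linarith
  have hint : IntegrableOn (fun t : ℝ => C₀ * t ^ (-(1 / (2 * c)))) (Set.Ioi 1) :=
    (integrableOn_Ioi_rpow_of_lt hexp one_pos).const_mul C₀
  refine ⟨1 + ∫⁻ t in Set.Ioi (1 : ℝ), ENNReal.ofReal (C₀ * t ^ (-(1 / (2 * c)))), ?_, ?_⟩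
  · exact ENNReal.add_ne_top.mpr ⟨ENNReal.one_ne_top, hint.lintegral_lt_top.ne⟩
  · intro Ω _ P _ S hS hS0 ht
    rw [lintegral_eq_lintegral_meas_lt P (Filter.Eventually.of_forall fun ω => (Real.exp_pos _).le)
      (by fun_prop)]
    rw [← Set.Ioc_union_Ioi_eq_Ioi (zero_le_one' ℝ)]
    refine (lintegral_union_le _ _ _).trans (add_le_add ?_ ?_)
    · calc _ ≤ ∫⁻ t in Set.Ioc (0 : ℝ) 1, 1 := lintegral_mono fun t => prob_le_one
        _ = 1 := by simp
    · refine setLIntegral_mono' measurableSet_Ioi fun t h1 => ?_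
      have h1 : 1 < t := h1
      have hl : 0 < Real.log t / c := div_pos (Real.log_pos h1) hc
      have h := ht (√(Real.log t / c)) (Real.sqrt_pos.mpr hl)
      refine (measure_mono ?_).trans (h.trans_eq ?_)
      · intro ω hω
        have hω : t < Real.exp (c * S ω ^ 2) := hω
        have := (Real.log_lt_iff_lt_exp (by linarith)).mpr hω
        show √(Real.log t / c) < S ω
        rw [Real.sqrt_lt' ?_]
        · rw [div_lt_iff₀ hc]; linarith
        · rcases (hS0 ω).lt_or_eq with h | h
          · exact h
          · rw [← h] at this
            have := Real.log_pos h1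
            simp at *; linarith
      · rw [Real.sq_sqrt hl.le, Real.rpow_def_of_pos (by linarith)]
        congr 3
        field_simp

theorem stmt15 {Ω : Type*} [MeasurableSpace Ω] (P : Measure Ω) [IsProbabilityMeasure P]
    (κ α C₀ : ℝ) (hκ : κ ∈ Set.Ioo (0 : ℝ) (1 / 2)) (hα : 4 * κ < α) (hC₀ : 0 < C₀)
    (S : ℤ × ℤ → Ω → ℝ) (hmeas : ∀ k, Measurable (S k)) (hnonneg : ∀ k ω, 0 ≤ S k ω)
    (htail : ∀ k : ℤ × ℤ, ∀ A > (0 : ℝ),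
      P {ω | A < S k ω} ≤ ENNReal.ofReal (C₀ * Real.exp (-A ^ 2 / 2))) :
    ∫⁻ ω, ⨆ k : ℤ × ℤ, ENNReal.ofReal
        (Real.exp (κ * S k ω ^ 2)
          / ((1 + ((k.1 : ℝ) ^ 2 + (k.2 : ℝ) ^ 2)) ^ ((1 : ℝ) / 2)) ^ α) ∂P < ⊤ := by
  obtain ⟨hκ0, hκ2⟩ := hκ
  have hα0 : 0 < α := by linarith
  obtain ⟨p, hp1, hp2⟩ : ∃ p, max 1 (2 / α) < p ∧ p < 1 / (2 * κ) := by
    apply exists_between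
    rw [max_lt_iff, lt_div_iff₀ (by positivity), div_lt_div_iff₀ hα0 (by positivity)]
    constructor <;> linarith
  obtain ⟨hp1, hpα⟩ := max_lt_iff.mp hp1
  rw [div_lt_iff₀ hα0] at hpα
  rw [lt_div_iff₀ (by positivity)] at hp2
  obtain ⟨M, hM, hMb⟩ := aux_exp (p * κ) C₀ (by positivity) (by linarith) hC₀
  have hsum := aux_sum (p * α) hpα
  set B : ℤ × ℤ → ℝ := fun k => (1 + ((k.1 : ℝ) ^ 2 + (k.2 : ℝ) ^ 2)) ^ ((1 : ℝ) / 2) with hB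
  have hBpos : ∀ k, 0 < B k := fun k => by simp only [hB]; positivity
  have key : ∀ ω, (⨆ k : ℤ × ℤ, ENNReal.ofReal (Real.exp (κ * S k ω ^ 2) / B k ^ α)) ≤
      1 + ∑' k, ENNReal.ofReal (Real.exp (p * κ * S k ω ^ 2)) *
        ENNReal.ofReal (B k ^ (-(p * α))) := by
    intro ω
    refine iSup_le fun k => ?_
    refine le_trans ?_ (add_le_add_right (ENNReal.le_tsum k) 1)
    rw [← ENNReal.ofReal_mul (Real.exp_pos _).le, ← ENNReal.ofReal_one,
      ← ENNReal.ofReal_add zero_le_one (mul_pos (Real.exp_pos _) (Real.rpow_pos_of_pos (hBpos k) _)).le]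
    apply ENNReal.ofReal_le_ofReal
    set X := Real.exp (κ * S k ω ^ 2) / B k ^ α with hX
    have hXp : 0 < X := div_pos (Real.exp_pos _) (Real.rpow_pos_of_pos (hBpos k) _)
    have hXe : Real.exp (p * κ * S k ω ^ 2) * B k ^ (-(p * α)) = X ^ p := by
      rw [hX, Real.div_rpow (Real.exp_pos _).le (Real.rpow_nonneg (hBpos k).le _), ← Real.exp_mul,
        ← Real.rpow_mul (hBpos k).le, Real.rpow_neg (hBpos k).le, div_eq_mul_inv]
      ring_nf
    rw [hXe]
    rcases le_total X 1 with h | h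
    · have := Real.rpow_pos_of_pos hXp p; linarith
    · have := Real.rpow_le_rpow_of_exponent_le h hp1.le
      rw [Real.rpow_one] at this; linarith
  refine (lintegral_mono key).trans_lt ?_
  rw [lintegral_add_left measurable_const, lintegral_tsum (fun k => by
    have := hmeas k
    fun_prop)]
  refine ENNReal.add_lt_top.mpr ⟨by simp, ?_⟩
  calc _ ≤ ∑' k, M * ENNReal.ofReal (B k ^ (-(p * α))) := by
        refine ENNReal.tsum_le_tsum fun k => ?_
        rw [lintegral_mul_const' _ _ ENNReal.ofReal_ne_top]
        gcongr
        exact hMb P (S k) (hmeas k) (hnonneg k) (htail k)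
    _ = M * ∑' k, ENNReal.ofReal (B k ^ (-(p * α))) := ENNReal.tsum_mul_left
    _ < ⊤ := ENNReal.mul_lt_top hM.lt_top hsum.tsum_ofReal_lt_top
end
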